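/- arXiv:2108.13652 — 3 statements merged into one kernel-verified Lean document; each statement's English description precedes it below -/
import Mathlib

section
/- Let k be an algebraically closed field of characteristic 3 and let g = sl_3(k) be the Lie algebra of traceless 3×3 matrices over k. Then the fifth Chevalley–Eilenberg cohomology of g with trivial coefficients satisfies dim_k H^5(g, k) = 7. -/
/-! Chevalley–Eilenberg cohomology of a Lie algebra with coefficients in a module. -/

section ChevalleyEilenberg

variable (k : Type*) [Field k]
variable (g : Type*) [LieRing g] [LieAlgebra k g]
variable (M : Type*) [AddCommGroup M] [Module k M] [LieRingModule g M] [LieModule k g M]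

/-- The Chevalley–Eilenberg differential, as a raw function from alternating `n`-cochains
to `(n+1)`-ary functions:
`dψ(l₀,…,lₙ) = Σ_{i<j} (−1)^{i+j} ψ(⁅lᵢ,lⱼ⁆, …, l̂ᵢ, …, l̂ⱼ, …) + Σ_i (−1)^i ⁅lᵢ, ψ(…, l̂ᵢ, …)⁆`
(indices written from 0; this is the paper's formula with 1-based indices shifted by one). -/
def ceD : ∀ {n : ℕ}, (g [⋀^Fin n]→ₗ[k] M) → ((Fin (n + 1) → g) → M)
  | 0, ψ, v => ⁅v 0, ψ ![]⁆
  | (n + 1), ψ, v =>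
      (∑ i : Fin (n + 2), ∑ j : Fin (n + 2),
        if h : i < j then
          ((-1 : ℤ) ^ (i.val + j.val)) •
            ψ (Fin.cons ⁅v i, v j⁆
              (fun l => v (i.succAbove
                ((j.pred (Fin.pos_iff_ne_zero.mp (lt_of_le_of_lt i.zero_le h))).succAbove l))))
        else 0)
      + ∑ i : Fin (n + 2), ((-1 : ℤ) ^ i.val) • ⁅v i, ψ (fun l => v (i.succAbove l))⁆

variable {k g M}

private lemma dite_add_zero {P : Prop} [Decidable P] {N : Type*} [AddZeroClass N]
    (A B : P → N) :
    (dite P (fun h => A h + B h) fun _ => 0) =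
      (dite P A fun _ => 0) + (dite P B fun _ => 0) := by
  split_ifs <;> simp

private lemma dite_smul_zero {P : Prop} [Decidable P] {N : Type*} [AddCommGroup N] [Module k N]
    (c : k) (A : P → N) :
    (dite P (fun h => c • A h) fun _ => 0) = c • dite P A fun _ => 0 := by
  split_ifs <;> simp

lemma ceD_add {n : ℕ} (ψ φ : g [⋀^Fin n]→ₗ[k] M) (v : Fin (n + 1) → g) :
    ceD k g M (ψ + φ) v = ceD k g M ψ v + ceD k g M φ v := by
  cases n with
  | zero => simp [ceD]
  | succ n =>
    simp only [ceD, AlternatingMap.add_apply, smul_add, lie_add, dite_add_zero,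
      Finset.sum_add_distrib]
    abel

lemma ceD_smul {n : ℕ} (c : k) (ψ : g [⋀^Fin n]→ₗ[k] M) (v : Fin (n + 1) → g) :
    ceD k g M (c • ψ) v = c • ceD k g M ψ v := by
  cases n with
  | zero => simp [ceD]
  | succ n =>
    simp only [ceD, AlternatingMap.smul_apply, lie_smul, smul_comm _ c, dite_smul_zero,
      ← Finset.smul_sum, smul_add]

lemma ceD_zero {n : ℕ} (v : Fin (n + 1) → g) :
    ceD k g M (0 : g [⋀^Fin n]→ₗ[k] M) v = 0 := by
  cases n with
  | zero => simp [ceD]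
  | succ n => simp [ceD]

variable (k g M)

/-- The space of Chevalley–Eilenberg `n`-cocycles `Zⁿ(g, M)`. -/
def ceZ (n : ℕ) : Submodule k (g [⋀^Fin n]→ₗ[k] M) where
  carrier := {ψ | ∀ v, ceD k g M ψ v = 0}
  add_mem' := by
    intro ψ φ hψ hφ v
    rw [ceD_add, hψ v, hφ v, add_zero]
  zero_mem' := fun v => ceD_zero v
  smul_mem' := by
    intro c ψ hψ v
    rw [ceD_smul, hψ v, smul_zero]

/-- The space of Chevalley–Eilenberg `n`-coboundaries `Bⁿ(g, M)`: in positive degree, the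
alternating `n`-cochains that agree (as functions) with `dφ` for some `(n-1)`-cochain `φ`. -/
def ceB : (n : ℕ) → Submodule k (g [⋀^Fin n]→ₗ[k] M)
  | 0 => ⊥
  | (n + 1) =>
      { carrier := {ψ | ∃ φ : g [⋀^Fin n]→ₗ[k] M, ∀ v, ψ v = ceD k g M φ v}
        add_mem' := by
          rintro ψ χ ⟨φ₁, h₁⟩ ⟨φ₂, h₂⟩
          exact ⟨φ₁ + φ₂, fun v => by
            rw [AlternatingMap.add_apply, h₁ v, h₂ v, ceD_add]⟩
        zero_mem' := ⟨0, fun v => by rw [AlternatingMap.zero_apply, ceD_zero]⟩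
        smul_mem' := by
          rintro c ψ ⟨φ, h⟩
          exact ⟨c • φ, fun v => by rw [AlternatingMap.smul_apply, h v, ceD_smul]⟩ }

/-- The `n`-th Chevalley–Eilenberg cohomology space `Hⁿ(g, M)`: the quotient of the space of
`n`-cocycles by the space of `n`-coboundaries (viewed inside the cocycles). -/
abbrev ceH (n : ℕ) : Type _ :=
  ↥(ceZ k g M n) ⧸ (ceB k g M n).comap (ceZ k g M n).subtype

end ChevalleyEilenberg

/-- The Lie algebra `sl₃(k)` of traceless `3 × 3` matrices over `k`. -/
abbrev sl3 (k : Type*) [Field k] := ↥(LieAlgebra.SpecialLinear.sl (Fin 3) k)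

/-- `k` as the trivial one-dimensional module over `sl₃(k)` (zero bracket action). -/
instance (k : Type*) [Field k] : LieRingModule (sl3 k) k where
  bracket _ _ := 0
  add_lie _ _ _ := by simp
  lie_add _ _ _ := by simp
  leibniz_lie _ _ _ := by simp

instance (k : Type*) [Field k] : LieModule k (sl3 k) k where
  smul_lie _ _ _ := by simp [Bracket.bracket]
  lie_smul _ _ _ := by simp [Bracket.bracket]

/-! For trivial coefficients the differential is dual to the Chevalley–Eilenberg boundary `∂` on
the exterior algebra. Given cycles `z i` and functionals `Q i` dual to them that vanish on
boundaries, an operator `S` with `id = S ∂ + ∂ S + ∑ i, Q i • z i` on `⋀⁵` identifies `H⁵` with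
the dual of the span of the `z i`. In characteristic 3 the element `h = diag(1, -1, 0)` of `sl₃`
has weights `0` and `±1`, so Cartan's formula lets exterior multiplication by `h` serve as `S` on
all monomials of weight nonzero modulo 3. The complex of weight zero is small enough to write down
`S` and seven cycles explicitly; the identity has coefficients in `ℤ/3` and is checked on exterior
monomials. -/

section ExteriorRec

variable {R M : Type*} [CommRing R] [AddCommGroup M] [Module R M]

open ExteriorAlgebra

lemma ι_mul_ι_mul_swap (x y : M) (w : ExteriorAlgebra R M) :
    ι R x * (ι R y * w) = -(ι R y * (ι R x * w)) := by
  rw [← mul_assoc, eq_neg_of_add_eq_zero_left (ι_add_mul_swap x y), neg_mul, mul_assoc]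

lemma ιMulti_cons (x : M) {n : ℕ} (u : Fin n → M) :
    ιMulti R (n + 1) (Fin.cons x u) = ι R x * ιMulti R n u :=
  ιMulti_succ_apply _

/-- The operator `D` on an exterior algebra determined by `D 1 = 0` and the twisted Leibniz rule
`D (x ∧ w) = A x w + c • x ∧ D w`. -/
noncomputable def exteriorRec (A : M →ₗ[R] ExteriorAlgebra R M →ₗ[R] ExteriorAlgebra R M) (c : R)
    (hA : ∀ x w, A x (ι R x * w) + c • (ι R x * A x w) = 0) :
    ExteriorAlgebra R M →ₗ[R] ExteriorAlgebra R M :=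
  CliffordAlgebra.foldr' 0
    (A.compl₂ (LinearMap.fst R _ _) +
      c • (LinearMap.mul R _ ∘ₗ ι R).compl₂ (LinearMap.snd R (ExteriorAlgebra R M) _))
    (fun x w t => by
      have hsq : ι R x * (ι R x * t) = 0 := by rw [← mul_assoc, ι_sq_zero, zero_mul]
      calc
        _ = A x (ι R x * w) + c • (ι R x * (A x w + c • (ι R x * t))) := rfl
        _ = _ := by
          rw [mul_add, mul_smul_comm, hsq, smul_zero, add_zero, hA, zero_apply,
            zero_smul])
    0

variable (A : M →ₗ[R] ExteriorAlgebra R M →ₗ[R] ExteriorAlgebra R M) (c : R)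
  (hA : ∀ x w, A x (ι R x * w) + c • (ι R x * A x w) = 0)

lemma exteriorRec_one : exteriorRec A c hA 1 = 0 :=
  (CliffordAlgebra.foldr'_algebraMap 0 _ _ (0 : ExteriorAlgebra R M) (1 : R)).trans (smul_zero _)

lemma exteriorRec_ι_mul (x : M) (w : ExteriorAlgebra R M) :
    exteriorRec A c hA (ι R x * w) = A x w + c • (ι R x * exteriorRec A c hA w) :=
  CliffordAlgebra.foldr'_ι_mul 0 _ _ 0 x w

lemma exteriorAlgebra_linearMap_ext {N : Type*} [AddCommGroup N] [Module R N]
    {f g : ExteriorAlgebra R M →ₗ[R] N} (one : f 1 = g 1)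
    (ι_mul : ∀ x w, f w = g w → f (ι R x * w) = g (ι R x * w)) : f = g := by
  refine LinearMap.ext fun w => ?_
  induction w using CliffordAlgebra.left_induction with
  | algebraMap r => rw [Algebra.algebraMap_eq_smul_one, map_smul, map_smul, one]
  | add w₁ w₂ h₁ h₂ => rw [map_add, map_add, h₁, h₂]
  | ι_mul w x h => exact ι_mul x w h

end ExteriorRec

section LieBoundary

open ExteriorAlgebra

variable (R : Type*) {L : Type*} [CommRing R] [LieRing L] [LieAlgebra R L]

/-- The derivation of the exterior algebra of a Lie algebra that extends `ad x`. -/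
noncomputable def exteriorAd (x : L) : ExteriorAlgebra R L →ₗ[R] ExteriorAlgebra R L :=
  exteriorRec (LinearMap.mul R _ ∘ₗ ι R ∘ₗ LieAlgebra.ad R L x) 1 fun y w => by
    have h : ι R ⁅x, y⁆ * ι R y + ι R y * ι R ⁅x, y⁆ = 0 := ι_add_mul_swap _ _
    simp only [LinearMap.comp_apply, LinearMap.mul_apply', LieAlgebra.ad_apply, one_smul,
      ← mul_assoc]
    rw [← add_mul, h, zero_mul]

variable {R}

lemma exteriorAd_one (x : L) : exteriorAd R x 1 = 0 := exteriorRec_one _ _ _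

lemma exteriorAd_ι_mul (x y : L) (w : ExteriorAlgebra R L) :
    exteriorAd R x (ι R y * w) = ι R ⁅x, y⁆ * w + ι R y * exteriorAd R x w :=
  (exteriorRec_ι_mul _ _ _ _ _).trans (by rw [one_smul]; rfl)

lemma exteriorAd_add (x y : L) : exteriorAd R (x + y) = exteriorAd R x + exteriorAd R y :=
  exteriorAlgebra_linearMap_ext (by simp [exteriorAd_one]) fun z w h => by
    rw [exteriorAd_ι_mul, h]
    simp only [LinearMap.add_apply, exteriorAd_ι_mul, add_lie, map_add, add_mul, mul_add]
    abel

lemma exteriorAd_smul (c : R) (x : L) : exteriorAd R (c • x) = c • exteriorAd R x :=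
  exteriorAlgebra_linearMap_ext (by simp [exteriorAd_one]) fun z w h => by
    rw [exteriorAd_ι_mul, h]
    simp [exteriorAd_ι_mul]

lemma exteriorAd_ι (x y : L) : exteriorAd R x (ι R y) = ι R ⁅x, y⁆ := by
  simpa [exteriorAd_one] using exteriorAd_ι_mul x y 1

lemma exteriorAd_ιMulti (x : L) {n : ℕ} (v : Fin (n + 1) → L) :
    exteriorAd R x (ιMulti R (n + 1) v) =
      ∑ j, (-1 : ℤ) ^ j.val • (ι R ⁅x, v j⁆ * ιMulti R n fun l => v (j.succAbove l)) := by
  induction n with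
  | zero => simp [ιMulti_succ_apply, exteriorAd_ι]
  | succ n ih =>
    cases v using Fin.consCases with | cons y u
    have hremove (j : Fin (n + 1)) :
        (fun l => (Fin.cons y u : Fin (n + 2) → L) (j.succ.succAbove l)) =
          Fin.cons y fun l => u (j.succAbove l) := by
      ext l
      cases l using Fin.cases <;> simp
    rw [ιMulti_cons, exteriorAd_ι_mul, Fin.sum_univ_succ, ih, Finset.mul_sum]
    simp only [hremove, ιMulti_cons, ι_mul_ι_mul_swap _ y, Fin.cons_zero, Fin.cons_succ,
      Fin.zero_succAbove, Fin.val_zero, Fin.val_succ, pow_zero, pow_succ, mul_neg_one, neg_smul_neg,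
      one_smul, mul_smul_comm]

variable (R L) in
/-- The Chevalley–Eilenberg boundary on the exterior algebra of a Lie algebra. -/
noncomputable def lieBoundary : ExteriorAlgebra R L →ₗ[R] ExteriorAlgebra R L :=
  exteriorRec
    { toFun x := -exteriorAd R x
      map_add' x y := by rw [exteriorAd_add, neg_add]
      map_smul' c x := by rw [exteriorAd_smul, smul_neg, RingHom.id_apply] }
    (-1)
    fun x w => by simp [exteriorAd_ι_mul]

lemma lieBoundary_one : lieBoundary R L 1 = 0 := exteriorRec_one _ _ _

lemma lieBoundary_ι_mul (x : L) (w : ExteriorAlgebra R L) :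
    lieBoundary R L (ι R x * w) = -exteriorAd R x w - ι R x * lieBoundary R L w :=
  (exteriorRec_ι_mul _ _ _ _ _).trans (by rw [neg_one_smul, ← sub_eq_add_neg]; rfl)

lemma lieBoundary_ι (x : L) : lieBoundary R L (ι R x) = 0 := by
  simpa [exteriorAd_one, lieBoundary_one] using lieBoundary_ι_mul (R := R) x 1

lemma lieBoundary_ιMulti {n : ℕ} (v : Fin (n + 2) → L) :
    lieBoundary R L (ιMulti R (n + 2) v) =
      ∑ i : Fin (n + 2), ∑ j : Fin (n + 2),
        if h : i < j then
          (-1 : ℤ) ^ (i.val + j.val) • (ι R ⁅v i, v j⁆ * ιMulti R n fun l => v (i.succAbove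
            ((j.pred (Fin.pos_iff_ne_zero.mp (lt_of_le_of_lt i.zero_le h))).succAbove l)))
        else 0 := by
  induction n with
  | zero =>
    simp [Fin.sum_univ_succ, ιMulti_succ_apply, lieBoundary_ι_mul, exteriorAd_ι, lieBoundary_ι]
    rfl
  | succ n ih =>
    cases v using Fin.consCases with | cons x u
    have hremove (i j : Fin (n + 2)) (hj : j ≠ 0) :
        (fun l => (Fin.cons x u : Fin (n + 3) → L) (i.succ.succAbove (j.succAbove l))) =
          Fin.cons x fun l => u (i.succAbove ((j.pred hj).succAbove l)) := by
      obtain ⟨j, rfl⟩ := Fin.exists_succ_eq_of_ne_zero hj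
      ext l
      cases l using Fin.cases with
      | zero => simp
      | succ l => simp only [Fin.cons_succ, Fin.succ_succAbove_succ]; rfl
    rw [ιMulti_cons, lieBoundary_ι_mul, Fin.sum_univ_succ, Fin.sum_univ_succ, ih,
      exteriorAd_ιMulti, sub_eq_add_neg]
    congr 1
    · simp [pow_succ]
    · simp only [Finset.mul_sum, ← Finset.sum_neg_distrib]
      refine Finset.sum_congr rfl fun i _ => ?_
      conv_rhs => rw [Fin.sum_univ_succ, dif_neg (Fin.not_lt_zero _), zero_add]
      refine Finset.sum_congr rfl fun j _ => ?_
      by_cases h : i < j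
      · have hj : j ≠ 0 := Fin.pos_iff_ne_zero.mp (lt_of_le_of_lt i.zero_le h)
        simp only [dif_pos h, dif_pos (Fin.succ_lt_succ_iff.2 h), Fin.pred_succ, Fin.cons_succ,
          hremove i j hj, ιMulti_cons, ι_mul_ι_mul_swap _ x, Fin.val_succ, pow_succ, pow_add,
          mul_smul_comm, smul_neg, neg_mul, neg_neg, mul_one, mul_neg]
      · simp [h]

end LieBoundary

section CochainFunctional

open ExteriorAlgebra

section Pairing

variable {R M N : Type*} [CommRing R] [AddCommGroup M] [Module R M] [AddCommGroup N] [Module R N]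
  {n : ℕ}

/-- The linear map on the exterior algebra that extends an alternating `n`-form by zero outside
degree `n`. -/
noncomputable def alternatingExtension :
    (M [⋀^Fin n]→ₗ[R] N) →ₗ[R] ExteriorAlgebra R M →ₗ[R] N :=
  liftAlternating ∘ₗ LinearMap.single R (fun i => M [⋀^Fin i]→ₗ[R] N) n

lemma alternatingExtension_ιMulti (ψ : M [⋀^Fin n]→ₗ[R] N) (v : Fin n → M) :
    alternatingExtension ψ (ιMulti R n v) = ψ v := by
  simp [alternatingExtension]

lemma alternatingExtension_compAlternatingMap (ψ : M [⋀^Fin n]→ₗ[R] N) :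
    (alternatingExtension ψ).compAlternatingMap (ιMulti R n) = ψ :=
  AlternatingMap.ext (alternatingExtension_ιMulti ψ)

lemma alternatingExtension_compAlternatingMap_of_ne {m : ℕ} (h : m ≠ n)
    (ψ : M [⋀^Fin n]→ₗ[R] N) : (alternatingExtension ψ).compAlternatingMap (ιMulti R m) = 0 := by
  ext v
  simp [alternatingExtension, h]

lemma alternatingExtension_apply_of_mem {ψ : M [⋀^Fin n]→ₗ[R] N} {G : ExteriorAlgebra R M →ₗ[R] N}
    (hG : ∀ v, ψ v = G (ιMulti R n v)) {w : ExteriorAlgebra R M} (hw : w ∈ ⋀[R]^n M) :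
    alternatingExtension ψ w = G w := by
  rw [← ιMulti_span_fixedDegree] at hw
  refine LinearMap.eqOn_span (Set.forall_mem_range.2 fun v => ?_) hw
  rw [alternatingExtension_ιMulti, hG]

end Pairing

variable {k g M : Type*} [Field k] [LieRing g] [LieAlgebra k g]
  [AddCommGroup M] [Module k M] [LieRingModule g M] [LieModule.IsTrivial g M] {n : ℕ}

lemma ceD_compAlternatingMap_ιMulti (G : ExteriorAlgebra k g →ₗ[k] M) (v : Fin (n + 1) → g) :
    ceD k g M (G.compAlternatingMap (ιMulti k n)) v =
      G (lieBoundary k g (ιMulti k (n + 1) v)) := by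
  cases n with
  | zero => simp [ceD, ιMulti_succ_apply, lieBoundary_ι, trivial_lie_zero]
  | succ n =>
    simp only [ceD, lieBoundary_ιMulti, trivial_lie_zero, smul_zero, Finset.sum_const_zero,
      add_zero, map_sum, apply_dite G, map_zsmul, map_zero, LinearMap.compAlternatingMap_apply,
      ιMulti_cons]

variable [LieModule k g M]

lemma alternatingExtension_lieBoundary {ψ : g [⋀^Fin n]→ₗ[k] M} (hψ : ψ ∈ ceZ k g M n)
    (w : ExteriorAlgebra k g) : alternatingExtension ψ (lieBoundary k g w) = 0 := by
  suffices h : alternatingExtension ψ ∘ₗ lieBoundary k g = 0 from LinearMap.congr_fun h w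
  refine lhom_ext fun m => AlternatingMap.ext fun v => ?_
  cases m with
  | zero => simp [lieBoundary_one]
  | succ m =>
    refine (ceD_compAlternatingMap_ιMulti (alternatingExtension ψ) v).symm.trans ?_
    rcases eq_or_ne m n with rfl | h
    · rw [alternatingExtension_compAlternatingMap]
      exact hψ v
    · rw [alternatingExtension_compAlternatingMap_of_ne h]
      exact ceD_zero v

lemma mem_ceB_succ_iff {ψ : g [⋀^Fin (n + 1)]→ₗ[k] M} :
    ψ ∈ ceB k g M (n + 1) ↔ ∃ G : ExteriorAlgebra k g →ₗ[k] M,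
      ∀ v, ψ v = G (lieBoundary k g (ιMulti k (n + 1) v)) := by
  constructor
  · rintro ⟨φ, hφ⟩
    refine ⟨alternatingExtension φ, fun v => ?_⟩
    rw [hφ, ← ceD_compAlternatingMap_ιMulti, alternatingExtension_compAlternatingMap]
  · rintro ⟨G, hG⟩
    exact ⟨G.compAlternatingMap (ιMulti k n), fun v => by
      rw [hG, ceD_compAlternatingMap_ιMulti]⟩

end CochainFunctional

section Contraction

open ExteriorAlgebra

lemma finrank_quotient_eq_card {R V κ : Type*} [CommRing R] [Nontrivial R]
    [AddCommGroup V] [Module R V] [Fintype κ] [DecidableEq κ] {W : Submodule R V}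
    (φ : κ → V →ₗ[R] R) (hW : ∀ v, v ∈ W ↔ ∀ i, φ i v = 0)
    (hdual : ∀ j, ∃ v, ∀ i, φ i v = if i = j then 1 else 0) :
    Module.finrank R (V ⧸ W) = Fintype.card κ := by
  have hrange : LinearMap.range (LinearMap.pi φ) = ⊤ := by
    rw [← top_le_iff, ← (Pi.basisFun R κ).span_eq, Submodule.span_le, Set.range_subset_iff]
    intro j
    obtain ⟨v, hv⟩ := hdual j
    exact ⟨v, funext fun i => (hv i).trans (by rw [Pi.basisFun_apply, Pi.single_apply])⟩
  have hker : LinearMap.ker (LinearMap.pi φ) = W :=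
    Submodule.ext fun v => funext_iff.trans (hW v).symm
  rw [← hker, ((LinearMap.pi φ).quotKerEquivOfSurjective
    (LinearMap.range_eq_top.1 hrange)).finrank_eq, Module.finrank_fintype_fun_eq_card]

variable {k g κ : Type*} [Field k] [LieRing g] [LieAlgebra k g] [LieRingModule g k]
  [LieModule k g k] [LieModule.IsTrivial g k] [Fintype κ] [DecidableEq κ] {n : ℕ}

/-- An operator contracting the chains in degree `n + 1` onto the span of the cycles `z i`
identifies the cohomology in that degree with the dual of this span. -/
theorem finrank_ceH_succ_of_contraction (S : ExteriorAlgebra k g →ₗ[k] ExteriorAlgebra k g)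
    (z : κ → ExteriorAlgebra k g) (Q : κ → ExteriorAlgebra k g →ₗ[k] k)
    (hz_mem : ∀ i, z i ∈ ⋀[k]^(n + 1) g) (hz : ∀ i, lieBoundary k g (z i) = 0)
    (hQ : ∀ j, ∀ w ∈ ⋀[k]^(n + 2) g, Q j (lieBoundary k g w) = 0)
    (hQz : ∀ i j, Q j (z i) = if i = j then 1 else 0)
    (hS : ∀ w ∈ ⋀[k]^(n + 1) g,
      w = S (lieBoundary k g w) + lieBoundary k g (S w) + ∑ i, Q i w • z i) :
    Module.finrank k (ceH k g k (n + 1)) = Fintype.card κ := by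
  refine finrank_quotient_eq_card
    (fun i => LinearMap.applyₗ (z i) ∘ₗ alternatingExtension ∘ₗ (ceZ k g k (n + 1)).subtype)
    (fun ψ => ⟨fun hB i => ?_, fun h => ?_⟩) fun j => ?_
  · obtain ⟨G, hG⟩ := mem_ceB_succ_iff.1 hB
    refine (alternatingExtension_apply_of_mem (G := G ∘ₗ lieBoundary k g) hG (hz_mem i)).trans ?_
    rw [LinearMap.comp_apply, hz, map_zero]
  · refine mem_ceB_succ_iff.2 ⟨alternatingExtension ψ.1 ∘ₗ S, fun v => ?_⟩
    have hperiods (i : κ) : alternatingExtension ψ.1 (z i) = 0 := h i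
    have hv := congrArg (alternatingExtension ψ.1) (hS _ (ιMulti_range k (n + 1) ⟨v, rfl⟩))
    simpa only [alternatingExtension_ιMulti, alternatingExtension_lieBoundary ψ.2, hperiods,
      map_add, map_sum, map_smul, smul_zero, Finset.sum_const_zero, add_zero,
      Submodule.subtype_apply, LinearMap.comp_apply] using hv
  · refine ⟨⟨(Q j).compAlternatingMap (ιMulti k (n + 1)), fun v => ?_⟩, fun i => ?_⟩
    · rw [ceD_compAlternatingMap_ιMulti, hQ j _ (ιMulti_range k _ ⟨v, rfl⟩)]
    · exact (alternatingExtension_apply_of_mem (fun _ => rfl) (hz_mem i)).trans (hQz i j)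

end Contraction

section ExteriorMonomial

open ExteriorAlgebra

variable {R M ι : Type*} [CommRing R] [AddCommGroup M] [Module R M]

/-- The monomial `b i₁ ∧ ⋯ ∧ b iₙ` of the exterior algebra, for `l = [i₁, …, iₙ]`. -/
noncomputable def exteriorMonomial (b : ι → M) (l : List ι) : ExteriorAlgebra R M :=
  (l.map fun i => ExteriorAlgebra.ι R (b i)).prod

lemma exteriorMonomial_cons (b : ι → M) (i : ι) (l : List ι) :
    exteriorMonomial (R := R) b (i :: l) = ExteriorAlgebra.ι R (b i) * exteriorMonomial b l :=
  List.prod_cons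

lemma exteriorMonomial_mem_exteriorPower (b : ι → M) (l : List ι) :
    exteriorMonomial b l ∈ ⋀[R]^l.length M := by
  induction l with
  | nil => exact Submodule.one_le.1 (pow_zero _).ge
  | cons i l ih =>
    rw [exteriorMonomial_cons, List.length_cons, ExteriorAlgebra.exteriorPower, pow_succ']
    exact Submodule.mul_mem_mul (LinearMap.mem_range_self _ _) ih

variable [LinearOrder ι]

lemma ιMulti_family_eq_exteriorMonomial (b : ι → M) {n : ℕ} (s : Set.powersetCard ι n) :
    ιMulti_family R n b s = exteriorMonomial b s.1.sort := by
  rw [exteriorMonomial, ← Finset.listMap_orderEmbOfFin_finRange s.1 (Set.powersetCard.card_eq s),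
    List.map_map]
  exact (ιMulti_apply _).trans (congrArg _ List.ofFn_eq_map)

variable (b : Module.Basis ι R M)

lemma exteriorMonomial_of_sortedLT {l : List ι} (hl : l.SortedLT) :
    exteriorMonomial b l = b.ExteriorAlgebra l.toFinset := by
  rw [ExteriorAlgebra.basis_apply_ofCard b rfl, ιMulti_family_eq_exteriorMonomial]
  exact congrArg _ ((List.toFinset_sort (· ≤ ·) hl.nodup).2 hl.sortedLE.pairwise).symm

lemma exteriorPower_ext {N : Type*} [AddCommGroup N] [Module R N] {n : ℕ}
    {f g : ExteriorAlgebra R M →ₗ[R] N}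
    (h : ∀ l : List ι, l.SortedLT → l.length = n →
      f (exteriorMonomial b l) = g (exteriorMonomial b l))
    {w : ExteriorAlgebra R M} (hw : w ∈ ⋀[R]^n M) : f w = g w := by
  have hfg : f ∘ₗ (⋀[R]^n M).subtype = g ∘ₗ (⋀[R]^n M).subtype :=
    (b.exteriorPower n).ext fun s => by
      simpa [ιMulti_family_eq_exteriorMonomial] using h _ (Finset.sortedLT_sort s.1) (by simp)
  exact LinearMap.congr_fun hfg ⟨w, hw⟩

lemma coord_exteriorMonomial {l l' : List ι} (hl : l.SortedLT) (hl' : l'.SortedLT) :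
    b.ExteriorAlgebra.coord l.toFinset (exteriorMonomial b l') = if l' = l then 1 else 0 := by
  rw [exteriorMonomial_of_sortedLT b hl', Module.Basis.coord_apply, Module.Basis.repr_self,
    Finsupp.single_apply]
  exact if_congr ⟨fun h => hl'.eq_of_mem_iff hl (by simpa using Finset.ext_iff.1 h),
    congrArg _⟩ rfl rfl

end ExteriorMonomial

/-- A formal integral combination of elements of `α`, as a list of coefficients and terms in which
repetitions are allowed, so that identities between combinations can be decided by evaluation. -/
abbrev FormalSum (α : Type*) := List (ℤ × α)

namespace FormalSum

variable {α β V W : Type*} [AddCommGroup V] [AddCommGroup W]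

/-- The value of a formal combination when each `a` is replaced by `f a`. -/
def eval (f : α → V) (L : FormalSum α) : V := (L.map fun t => t.1 • f t.2).sum

/-- The formal combination `∑ i, c i • i`. -/
def ofFn {n : ℕ} (c : Fin n → ℤ) : FormalSum (Fin n) := (List.finRange n).map fun i => (c i, i)

/-- The linear extension of `f` to formal combinations. -/
def bind (L : FormalSum α) (f : α → FormalSum β) : FormalSum β :=
  L.flatMap fun t => (f t.2).map fun u => (t.1 * u.1, u.2)

/-- The coefficient of `a` in a formal combination. -/
def coeff [DecidableEq α] (a : α) (L : FormalSum α) : ℤ := L.eval fun x => if x = a then 1 else 0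

/-- All coefficients of the formal combination are divisible by `p`. -/
def IsZeroMod [DecidableEq α] (p : ℕ) (L : FormalSum α) : Prop := ∀ t ∈ L, (p : ℤ) ∣ L.coeff t.2

instance [DecidableEq α] (p : ℕ) (L : FormalSum α) : Decidable (L.IsZeroMod p) :=
  inferInstanceAs (Decidable (∀ t ∈ L, (p : ℤ) ∣ L.coeff t.2))

lemma mem_bind {L : FormalSum α} {f : α → FormalSum β} {t : ℤ × β} :
    t ∈ L.bind f ↔ ∃ u ∈ L, ∃ v ∈ f u.2, (u.1 * v.1, v.2) = t := by
  simp only [bind, List.mem_flatMap, List.mem_map]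

lemma eval_nil (f : α → V) : eval f [] = 0 := rfl

lemma eval_cons (f : α → V) (t : ℤ × α) (L : FormalSum α) :
    eval f (t :: L) = t.1 • f t.2 + eval f L := List.sum_cons

lemma eval_singleton (f : α → V) (c : ℤ) (a : α) : eval f [(c, a)] = c • f a := List.sum_singleton

lemma eval_append (f : α → V) (L L' : FormalSum α) :
    eval f (L ++ L') = eval f L + eval f L' := by
  simp [eval]

lemma eval_ofFn {n : ℕ} (f : Fin n → V) (c : Fin n → ℤ) :
    eval f (ofFn c) = ∑ i, c i • f i := by
  simp [eval, ofFn, Fin.sum_univ_def, Function.comp_def]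

lemma map_eval {F : Type*} [FunLike F V W] [AddMonoidHomClass F V W] (φ : F) (f : α → V)
    (L : FormalSum α) : φ (eval f L) = eval (fun a => φ (f a)) L := by
  simp [eval, map_list_sum, Function.comp_def]

lemma eval_congr {f f' : α → V} {L : FormalSum α} (h : ∀ t ∈ L, f t.2 = f' t.2) :
    eval f L = eval f' L :=
  congrArg List.sum (List.map_congr_left fun t ht => by rw [h t ht])

lemma eval_bind (f : β → V) (L : FormalSum α) (g : α → FormalSum β) :
    eval f (L.bind g) = eval (fun a => eval f (g a)) L := by
  induction L with
  | nil => rfl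
  | cons t L ih =>
    rw [eval_cons, ← ih, bind, List.flatMap_cons, eval_append]
    simp [eval, mul_smul, List.smul_sum, Function.comp_def, bind]

lemma eval_bind_eq_map_eval {F : Type*} [FunLike F V W] [AddMonoidHomClass F V W] (φ : F)
    {f : α → V} {f' : β → W} {g : α → FormalSum β} {L : FormalSum α}
    (h : ∀ t ∈ L, eval f' (g t.2) = φ (f t.2)) : eval f' (L.bind g) = φ (eval f L) := by
  rw [eval_bind, map_eval]
  exact eval_congr h

lemma eval_eq_sum_coeff [DecidableEq α] (f : α → V) {L : FormalSum α} {s : Finset α}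
    (hs : ∀ t ∈ L, t.2 ∈ s) : eval f L = ∑ a ∈ s, L.coeff a • f a := by
  induction L with
  | nil => simp [coeff, eval_nil]
  | cons t L ih =>
    have ht : t.2 ∈ s := hs t List.mem_cons_self
    simp [coeff, eval_cons, ih fun u hu => hs u (List.mem_cons_of_mem t hu), add_smul,
      Finset.sum_add_distrib, ht]

lemma IsZeroMod.eval_eq_zero [DecidableEq α] {p : ℕ} {L : FormalSum α} (h : L.IsZeroMod p)
    (R : Type*) [Ring R] [CharP R p] [Module R V] (f : α → V) : eval f L = 0 := by
  rw [eval_eq_sum_coeff f (s := (L.map Prod.snd).toFinset)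
    fun t ht => List.mem_toFinset.2 (List.mem_map_of_mem ht)]
  refine Finset.sum_eq_zero fun a ha => ?_
  obtain ⟨t, ht, rfl⟩ := List.mem_map.1 (List.mem_toFinset.1 ha)
  rw [← Int.cast_smul_eq_zsmul R, (CharP.intCast_eq_zero_iff R p _).2 (h t ht), zero_smul]

end FormalSum

section FormalChain

open FormalSum

variable {ι : Type*} [LinearOrder ι]

/-- The product of a generator `i` with an exterior monomial, moved into increasing position. -/
def insertGenerator (i : ι) : List ι → FormalSum (List ι)
  | [] => [(1, [i])]
  | j :: l =>
    if i < j then [(1, i :: j :: l)]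
    else if i = j then []
    else (insertGenerator i l).bind fun l' => [(-1, j :: l')]

/-- The exterior product of a formal vector and a formal chain. -/
def formalWedge (x : FormalSum ι) (w : FormalSum (List ι)) : FormalSum (List ι) :=
  x.bind fun i => w.bind (insertGenerator i)

/-- The action of `x` on an exterior monomial, where `br` describes the Lie bracket. -/
def formalAd (br : ι → ι → FormalSum ι) (x : ι) : List ι → FormalSum (List ι)
  | [] => []
  | y :: l => formalWedge (br x y) [(1, l)] ++ formalWedge [(1, y)] (formalAd br x l)

/-- The Chevalley–Eilenberg boundary of an exterior monomial, where `br` describes the Lie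
bracket. -/
def formalBoundary (br : ι → ι → FormalSum ι) : List ι → FormalSum (List ι)
  | [] => []
  | x :: l =>
    ((formalAd br x l).bind fun l' => [(-1, l')]) ++ formalWedge [(-1, x)] (formalBoundary br l)

lemma sortedLT_and_subset_of_mem_insertGenerator {i : ι} {l : List ι} (hl : l.SortedLT)
    {t : ℤ × List ι} (ht : t ∈ insertGenerator i l) : t.2.SortedLT ∧ t.2 ⊆ i :: l := by
  induction l generalizing t with
  | nil => simp_all [insertGenerator, List.sortedLT_iff_pairwise]
  | cons j l ih =>
    rw [List.sortedLT_iff_pairwise, List.pairwise_cons] at hl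
    unfold insertGenerator at ht
    split_ifs at ht with hij hij'
    · grind [List.pairwise_cons]
    · simp at ht
    · obtain ⟨u, hu, v, hv, rfl⟩ := mem_bind.1 ht
      obtain rfl := List.mem_singleton.1 hv
      obtain ⟨hsorted, hsubset⟩ := ih hl.2.sortedLT hu
      grind [List.pairwise_cons]

lemma sortedLT_of_mem_formalWedge {x : FormalSum ι} {w : FormalSum (List ι)}
    (hw : ∀ t ∈ w, t.2.SortedLT) {t : ℤ × List ι} (ht : t ∈ formalWedge x w) : t.2.SortedLT := by
  obtain ⟨i, -, _, hi, rfl⟩ := mem_bind.1 ht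
  obtain ⟨u, hu, v, hv, rfl⟩ := mem_bind.1 hi
  exact (sortedLT_and_subset_of_mem_insertGenerator (hw u hu) hv).1

lemma sortedLT_of_mem_formalAd (br : ι → ι → FormalSum ι) (x : ι) {l : List ι} (hl : l.SortedLT)
    {t : ℤ × List ι} (ht : t ∈ formalAd br x l) : t.2.SortedLT := by
  induction l generalizing t with
  | nil => simp [formalAd] at ht
  | cons y l ih =>
    have hl' : l.SortedLT := hl.pairwise.of_cons.sortedLT
    rcases List.mem_append.1 ht with ht | ht
    · exact sortedLT_of_mem_formalWedge (by simpa using hl') ht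
    · exact sortedLT_of_mem_formalWedge (fun u hu => ih hl' hu) ht

lemma sortedLT_of_mem_formalBoundary (br : ι → ι → FormalSum ι) {l : List ι} (hl : l.SortedLT)
    {t : ℤ × List ι} (ht : t ∈ formalBoundary br l) : t.2.SortedLT := by
  induction l generalizing t with
  | nil => simp [formalBoundary] at ht
  | cons x l ih =>
    have hl' : l.SortedLT := hl.pairwise.of_cons.sortedLT
    rcases List.mem_append.1 ht with ht | ht
    · obtain ⟨u, hu, v, hv, rfl⟩ := mem_bind.1 ht
      obtain rfl := List.mem_singleton.1 hv
      exact sortedLT_of_mem_formalAd (t := u) br x hl' hu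
    · exact sortedLT_of_mem_formalWedge (fun u hu => ih hl' hu) ht

section Eval

variable {R M : Type*} [CommRing R] [AddCommGroup M] [Module R M] (b : ι → M)

lemma eval_insertGenerator (i : ι) (l : List ι) :
    eval (exteriorMonomial b) (insertGenerator i l) =
      ExteriorAlgebra.ι R (b i) * exteriorMonomial b l := by
  induction l with
  | nil => simp [insertGenerator, eval_singleton, exteriorMonomial]
  | cons j l ih =>
    unfold insertGenerator
    split_ifs with hij hij'
    · simp [eval_singleton, exteriorMonomial_cons]
    · rw [hij', exteriorMonomial_cons, ← mul_assoc, ExteriorAlgebra.ι_sq_zero, zero_mul, eval_nil]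
    · rw [exteriorMonomial_cons, ι_mul_ι_mul_swap, ← ih]
      exact eval_bind_eq_map_eval (-LinearMap.mulLeft R (ExteriorAlgebra.ι R (b j)))
        fun t _ => by simp [eval_singleton, exteriorMonomial_cons]

lemma eval_formalWedge (x : FormalSum ι) (w : FormalSum (List ι)) :
    eval (exteriorMonomial b) (formalWedge x w) =
      ExteriorAlgebra.ι R (eval b x) * eval (exteriorMonomial b) w :=
  eval_bind_eq_map_eval
    (LinearMap.mulRight R (eval (exteriorMonomial b) w) ∘ₗ ExteriorAlgebra.ι R) fun s _ =>
      eval_bind_eq_map_eval (LinearMap.mulLeft R (ExteriorAlgebra.ι R (b s.2))) fun t _ =>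
        eval_insertGenerator b s.2 t.2

end Eval

variable {R L : Type*} [CommRing R] [LieRing L] [LieAlgebra R L] {b : ι → L}
  {br : ι → ι → FormalSum ι}

lemma eval_formalAd (hbr : ∀ i j, ⁅b i, b j⁆ = eval b (br i j)) (x : ι) (l : List ι) :
    eval (exteriorMonomial b) (formalAd br x l) = exteriorAd R (b x) (exteriorMonomial b l) := by
  induction l with
  | nil => exact (exteriorAd_one _).symm
  | cons y l ih =>
    rw [exteriorMonomial_cons, exteriorAd_ι_mul, formalAd, eval_append, eval_formalWedge,
      eval_formalWedge, ih, hbr]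
    simp [eval_singleton]

lemma eval_formalBoundary (hbr : ∀ i j, ⁅b i, b j⁆ = eval b (br i j)) (l : List ι) :
    eval (exteriorMonomial b) (formalBoundary br l) = lieBoundary R L (exteriorMonomial b l) := by
  induction l with
  | nil => exact lieBoundary_one.symm
  | cons x l ih =>
    have hneg : eval (exteriorMonomial (R := R) b) ((formalAd br x l).bind fun l' => [(-1, l')]) =
        -eval (exteriorMonomial b) (formalAd br x l) :=
      eval_bind_eq_map_eval (-LinearMap.id (R := R)) fun t _ => by simp [eval_singleton]
    rw [exteriorMonomial_cons, lieBoundary_ι_mul, formalBoundary, eval_append, eval_formalWedge,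
      ih, hneg, eval_formalAd hbr, eval_singleton, neg_one_zsmul, map_neg, neg_mul,
      ← sub_eq_add_neg]

lemma eval_bind_formalBoundary (hbr : ∀ i j, ⁅b i, b j⁆ = eval b (br i j))
    (w : FormalSum (List ι)) : eval (exteriorMonomial b) (w.bind (formalBoundary br)) =
      lieBoundary R L (eval (exteriorMonomial b) w) :=
  eval_bind_eq_map_eval _ fun t _ => eval_formalBoundary hbr t.2

/-- The linear operator that takes the value of the formal chain `s l` at each increasing exterior
monomial `l`. -/
noncomputable def formalOperator {R M : Type*} [CommRing R] [AddCommGroup M] [Module R M]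
    (b : Module.Basis ι R M) (s : List ι → FormalSum (List ι)) :
    ExteriorAlgebra R M →ₗ[R] ExteriorAlgebra R M :=
  b.ExteriorAlgebra.constr R fun t => eval (exteriorMonomial b) (s t.sort)

lemma formalOperator_exteriorMonomial {R M : Type*} [CommRing R] [AddCommGroup M] [Module R M]
    (b : Module.Basis ι R M) (s : List ι → FormalSum (List ι)) {l : List ι} (hl : l.SortedLT) :
    formalOperator b s (exteriorMonomial b l) = eval (exteriorMonomial b) (s l) := by
  rw [exteriorMonomial_of_sortedLT b hl, formalOperator, Module.Basis.constr_basis,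
    (List.toFinset_sort (· ≤ ·) hl.nodup).2 hl.sortedLE.pairwise]

lemma coord_eval_exteriorMonomial {R M : Type*} [CommRing R] [AddCommGroup M] [Module R M]
    (b : Module.Basis ι R M) {l : List ι} (hl : l.SortedLT) {w : FormalSum (List ι)}
    (hw : ∀ t ∈ w, t.2.SortedLT) :
    b.ExteriorAlgebra.coord l.toFinset (eval (exteriorMonomial b) w) = (w.coeff l : R) := by
  rw [map_eval, coeff]
  refine Eq.trans (eval_congr fun t ht => ?_) (map_eval (Int.castAddHom R) _ w).symm
  simp [coord_exteriorMonomial b hl (hw t ht)]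

lemma eval_homotopy {b : Module.Basis ι R L} (hbr : ∀ i j, ⁅b i, b j⁆ = eval b (br i j))
    (s : List ι → FormalSum (List ι)) {l : List ι} (hl : l.SortedLT) :
    eval (exteriorMonomial b) ((formalBoundary br l).bind s ++ (s l).bind (formalBoundary br)) =
      formalOperator b s (lieBoundary R L (exteriorMonomial b l)) +
        lieBoundary R L (formalOperator b s (exteriorMonomial b l)) := by
  rw [eval_append, eval_bind_formalBoundary hbr, formalOperator_exteriorMonomial b s hl,
    ← eval_formalBoundary hbr l]
  congr 1
  exact eval_bind_eq_map_eval _ fun t ht =>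
    (formalOperator_exteriorMonomial b s (sortedLT_of_mem_formalBoundary br hl ht)).symm

/-- The combinatorial form of `finrank_ceH_succ_of_contraction`: the contraction, the cycles and
their dual coordinates are given on exterior monomials and checked modulo `p`. -/
theorem finrank_ceH_succ_of_formalContraction {k g : Type*} [Field k] [LieRing g] [LieAlgebra k g]
    [LieRingModule g k] [LieModule k g k] [LieModule.IsTrivial g k] {n r : ℕ} (p : ℕ) [CharP k p]
    (b : Module.Basis ι k g) {br : ι → ι → FormalSum ι} (hbr : ∀ i j, ⁅b i, b j⁆ = eval b (br i j))
    (s : List ι → FormalSum (List ι)) (z : Fin r → FormalSum (List ι)) (pivot : Fin r → List ι)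
    (hz_mem : ∀ i, ∀ t ∈ z i, t.2.SortedLT ∧ t.2.length = n + 1)
    (hz : ∀ i, ((z i).bind (formalBoundary br)).IsZeroMod p)
    (hpivot : ∀ j, (pivot j).SortedLT)
    (hpivot_boundary : ∀ j, ∀ l : List ι, l.SortedLT → l.length = n + 2 →
      (p : ℤ) ∣ (formalBoundary br l).coeff (pivot j))
    (hpivot_z : ∀ i j, (z i).coeff (pivot j) = if i = j then 1 else 0)
    (hs : ∀ l : List ι, l.SortedLT → l.length = n + 1 → IsZeroMod p ((-1, l) ::
      ((formalBoundary br l).bind s ++ (s l).bind (formalBoundary br) ++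
        (ofFn fun i => if l = pivot i then 1 else 0).bind z))) :
    Module.finrank k (ceH k g k (n + 1)) = r := by
  refine (finrank_ceH_succ_of_contraction (formalOperator b s)
    (fun i => eval (exteriorMonomial b) (z i))
    (fun j => b.ExteriorAlgebra.coord (pivot j).toFinset) (fun i => ?_) (fun i => ?_)
    (fun j w hw => ?_) (fun i j => ?_) fun w hw => ?_).trans (Fintype.card_fin r)
  · refine list_sum_mem fun x hx => ?_
    obtain ⟨t, ht, rfl⟩ := List.mem_map.1 hx
    rw [← (hz_mem i t ht).2]
    exact zsmul_mem (exteriorMonomial_mem_exteriorPower _ _) _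
  · rw [← eval_bind_formalBoundary hbr, (hz i).eval_eq_zero k]
  · refine exteriorPower_ext (g := 0) b (f := b.ExteriorAlgebra.coord _ ∘ₗ lieBoundary k g)
      (fun l hl hln => ?_) hw
    rw [LinearMap.comp_apply, ← eval_formalBoundary hbr, coord_eval_exteriorMonomial b (hpivot j)
      fun t => sortedLT_of_mem_formalBoundary br hl, LinearMap.zero_apply,
      CharP.intCast_eq_zero_iff k p]
    exact hpivot_boundary j l hl hln
  · rw [coord_eval_exteriorMonomial b (hpivot j) fun t ht => (hz_mem i t ht).1, hpivot_z]
    push_cast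
    rfl
  · refine (exteriorPower_ext b (f := LinearMap.id) (g := formalOperator b s ∘ₗ lieBoundary k g +
      lieBoundary k g ∘ₗ formalOperator b s + ∑ i, (b.ExteriorAlgebra.coord
        (pivot i).toFinset).smulRight (eval (exteriorMonomial b) (z i)))
      (fun l hl hln => ?_) hw).trans (by simp)
    have hcontract := (hs l hl hln).eval_eq_zero k (exteriorMonomial (R := k) b)
    rw [eval_cons, eval_append, eval_homotopy hbr s hl, eval_bind, eval_ofFn, neg_one_zsmul,
      neg_add_eq_zero] at hcontract
    refine hcontract.trans ?_
    simp [-Module.Basis.coord_apply, coord_exteriorMonomial b (hpivot _) hl]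

end FormalChain

section SortedLists

lemma mem_sublistsLen_finRange_iff {m n : ℕ} {l : List (Fin n)} :
    l ∈ List.sublistsLen m (List.finRange n) ↔ l.SortedLT ∧ l.length = m :=
  List.mem_sublistsLen.trans <| and_congr_left fun _ =>
    ⟨fun h => ((List.sortedLT_finRange n).pairwise.sublist h).sortedLT, fun h =>
      List.sublist_of_subperm_of_sortedLE
        (List.subperm_of_subset h.nodup fun _ _ => List.mem_finRange _) h.sortedLE
        (List.sortedLT_finRange n).sortedLE⟩

instance {m n : ℕ} (P : List (Fin n) → Prop) [DecidablePred P] :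
    Decidable (∀ l : List (Fin n), l.SortedLT → l.length = m → P l) :=
  decidable_of_iff (∀ l ∈ List.sublistsLen m (List.finRange n), P l) <| by
    simp only [mem_sublistsLen_finRange_iff, and_imp]

end SortedLists

section SpecialLinear

open FormalSum

attribute [local instance] LieRing.ofAssociativeRing

/-- The traceless matrix with coordinates `c` in the basis `h = diag(1, -1, 0)`, `1`, `a₀ = E₁₂`,
`a₁ = E₂₃`, `a₂ = E₃₁`, `b₀ = E₂₁`, `b₁ = E₃₂`, `b₂ = E₁₃` of `sl₃` in characteristic 3, where the
identity is traceless and cyclic permutations of the indices shift the `aᵢ` and the `bᵢ`. -/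
def sl3Matrix {R : Type*} [CommRing R] (c : Fin 8 → R) : Matrix (Fin 3) (Fin 3) R :=
  !![c 0 + c 1, c 2, c 7;
    c 5, -c 0 + c 1, c 3;
    c 4, c 6, c 1]

lemma map_sl3Matrix {R S : Type*} [CommRing R] [CommRing S] (φ : R →+* S) (c : Fin 8 → R) :
    φ.mapMatrix (sl3Matrix c) = sl3Matrix (φ ∘ c) := by
  ext i j
  fin_cases i <;> fin_cases j <;> simp [sl3Matrix]

lemma trace_sl3Matrix {R : Type*} [CommRing R] [CharP R 3] (c : Fin 8 → R) :
    (sl3Matrix c).trace = 0 := by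
  have hthree : (3 : R) = 0 := mod_cast CharP.cast_eq_zero R 3
  simp only [sl3Matrix, Matrix.trace_fin_three_of]
  linear_combination c 1 * hthree

/-- The basis `h, 1, a₀, a₁, a₂, b₀, b₁, b₂` of `sl₃` in characteristic 3. -/
noncomputable def sl3Basis (k : Type*) [Field k] [CharP k 3] : Module.Basis (Fin 8) k (sl3 k) :=
  .ofEquivFun
    { toFun A := ![A.1 0 0 - A.1 2 2, A.1 2 2, A.1 0 1, A.1 1 2, A.1 2 0, A.1 1 0, A.1 2 1, A.1 0 2]
      map_add' A B := by ext i; fin_cases i <;> simp [add_sub_add_comm]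
      map_smul' c A := by ext i; fin_cases i <;> simp [mul_sub]
      invFun c := ⟨sl3Matrix c, trace_sl3Matrix c⟩
      left_inv A := by
        have htrace : A.1 0 0 + A.1 1 1 + A.1 2 2 = 0 :=
          (Matrix.trace_fin_three A.1).symm.trans A.2
        have hthree : (3 : k) = 0 := mod_cast CharP.cast_eq_zero k 3
        ext i j
        fin_cases i <;> fin_cases j <;> simp [sl3Matrix]
        linear_combination A.1 2 2 * hthree - htrace
      right_inv c := by ext i; fin_cases i <;> simp [sl3Matrix] }

lemma coe_sl3Basis (k : Type*) [Field k] [CharP k 3] (i : Fin 8) :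
    (sl3Basis k i).1 = sl3Matrix (Pi.single i 1) := by
  simp [sl3Basis]

/-- The brackets `⁅x, y⁆` of the elements `x < y` of the basis `sl3Basis`. -/
def sl3BracketTable : List ((Fin 8 × Fin 8) × FormalSum (Fin 8)) :=
  [((0, 2), [(-1, 2)]), ((0, 3), [(-1, 3)]), ((0, 4), [(-1, 4)]),
    ((0, 5), [(1, 5)]), ((0, 6), [(1, 6)]), ((0, 7), [(1, 7)]),
    ((2, 5), [(1, 0)]), ((3, 6), [(1, 0), (-1, 1)]), ((4, 7), [(1, 0), (1, 1)]),
    ((2, 3), [(1, 7)]), ((3, 4), [(1, 5)]), ((2, 4), [(-1, 6)]),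
    ((5, 6), [(-1, 4)]), ((6, 7), [(-1, 2)]), ((5, 7), [(1, 3)])]

/-- The bracket of two elements of the basis `sl3Basis`. -/
def sl3Bracket (i j : Fin 8) : FormalSum (Fin 8) :=
  (sl3BracketTable.lookup (i, j)).getD
    (((sl3BracketTable.lookup (j, i)).getD []).bind fun x => [(-1, x)])

lemma lie_sl3Matrix_single (i j : Fin 8) :
    ⁅sl3Matrix (Pi.single i (1 : ZMod 3)), sl3Matrix (Pi.single j (1 : ZMod 3))⁆ =
      eval (fun x => sl3Matrix (Pi.single x (1 : ZMod 3))) (sl3Bracket i j) := by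
  revert i j
  decide +kernel

lemma lie_sl3Basis (k : Type*) [Field k] [CharP k 3] (i j : Fin 8) :
    ⁅sl3Basis k i, sl3Basis k j⁆ = eval (sl3Basis k) (sl3Bracket i j) := by
  have hcoe (x : Fin 8) : (sl3Basis k x).1 =
      (ZMod.castHom dvd_rfl k).mapMatrix (sl3Matrix (Pi.single x 1)) := by
    rw [coe_sl3Basis, map_sl3Matrix]
    congr 1
    ext y
    simp [Pi.single_apply, apply_ite]
  have hlie := congrArg (ZMod.castHom dvd_rfl k).mapMatrix (lie_sl3Matrix_single i j)
  rw [Ring.lie_def, map_sub, map_mul, map_mul, map_eval] at hlie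
  simp only [← hcoe] at hlie
  refine Subtype.ext (hlie.trans ?_)
  exact (map_eval (LieAlgebra.SpecialLinear.sl (Fin 3) k).incl (sl3Basis k) (sl3Bracket i j)).symm

/-- The values of the contraction `sl3Contraction` on monomials of weight zero for `h`; it vanishes
on those that are not listed. -/
def sl3ContractionTable : List (List (Fin 8) × FormalSum (List (Fin 8))) :=
  [([0, 1, 2, 3, 4], [(1, [0, 1, 2, 3, 5, 6])]),
    ([1, 2, 3, 5, 6], [(-1, [2, 3, 4, 5, 6, 7])]),
    ([0, 1, 2, 5], [(-1, [0, 2, 3, 5, 6]), (1, [0, 2, 4, 5, 7])]),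
    ([0, 1, 3, 6], [(-1, [0, 1, 5, 6, 7]), (-1, [0, 2, 4, 5, 7]), (1, [0, 3, 4, 6, 7])]),
    ([0, 1, 4, 7], [(-1, [0, 1, 5, 6, 7]), (1, [0, 2, 3, 5, 6]), (-1, [0, 3, 4, 6, 7])]),
    ([0, 2, 3, 4], [(1, [0, 2, 3, 5, 6]), (1, [0, 2, 4, 5, 7])]),
    ([1, 2, 3, 4], [(-1, [0, 1, 5, 6, 7]), (1, [0, 2, 4, 5, 7]), (-1, [0, 3, 4, 6, 7]),
      (-1, [1, 2, 4, 5, 7])]),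
    ([0, 1, 4, 5], [(-1, [1, 3, 4, 5, 6])]), ([0, 1, 4, 6], [(1, [1, 2, 4, 5, 6])]),
    ([0, 1, 3, 5], [(1, [1, 3, 4, 5, 7])]), ([0, 1, 2, 6], [(1, [1, 2, 4, 6, 7])]),
    ([0, 1, 3, 7], [(1, [1, 2, 3, 5, 7])]), ([0, 1, 2, 7], [(-1, [1, 2, 3, 6, 7])])]

/-- A contraction of the chains of `sl₃` onto the span of the cycles `sl3Cycle` in degree 5. An
exterior monomial with `p` factors `aᵢ` and `q` factors `bᵢ` has weight `w = q - p` for `h`, and by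
Cartan's formula the operator `-w • h ∧ ·` contracts it up to the factor `w²`, which is `1` modulo 3
unless `w` is divisible by 3. The values in weight zero come from inverting blocks of the matrices
of the boundary. -/
def sl3Contraction (l : List (Fin 8)) : FormalSum (List (Fin 8)) :=
  formalWedge [(-(l.map ![0, 0, -1, -1, -1, 1, 1, 1]).sum, 0)] [(1, l)] ++
    (sl3ContractionTable.lookup l).getD []

/-- Cycles in degree 5 that represent a basis of the homology of `sl₃`. -/
def sl3Cycle : Fin 7 → FormalSum (List (Fin 8)) :=
  ![[(1, [1, 3, 4, 6, 7]), (1, [0, 1, 5, 6, 7]), (-1, [0, 2, 3, 5, 6]), (-1, [0, 2, 4, 5, 7]),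
      (-1, [0, 3, 4, 6, 7]), (-1, [1, 2, 4, 5, 7])],
    [(1, [0, 3, 4, 5, 6]), (-1, [1, 3, 4, 5, 6])],
    [(1, [0, 2, 4, 5, 6])],
    [(1, [0, 3, 4, 5, 7]), (1, [1, 3, 4, 5, 7])],
    [(1, [0, 2, 4, 6, 7]), (1, [1, 2, 4, 6, 7])],
    [(1, [0, 2, 3, 5, 7])],
    [(1, [0, 2, 3, 6, 7]), (-1, [1, 2, 3, 6, 7])]]

/-- The monomials whose coefficients are the coordinates dual to the cycles `sl3Cycle`. -/
def sl3Pivot : Fin 7 → List (Fin 8) :=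
  ![[1, 3, 4, 6, 7], [0, 3, 4, 5, 6], [0, 2, 4, 5, 6], [0, 3, 4, 5, 7], [0, 2, 4, 6, 7],
    [0, 2, 3, 5, 7], [0, 2, 3, 6, 7]]

lemma isZeroMod_sl3Cycle_bind_formalBoundary (i : Fin 7) :
    ((sl3Cycle i).bind (formalBoundary sl3Bracket)).IsZeroMod 3 := by
  revert i
  decide +kernel

lemma coeff_sl3Pivot_sl3Cycle (i j : Fin 7) :
    (sl3Cycle i).coeff (sl3Pivot j) = if i = j then 1 else 0 := by
  revert i j
  decide +kernel

lemma three_dvd_coeff_sl3Pivot_formalBoundary (j : Fin 7) (l : List (Fin 8)) (hl : l.SortedLT)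
    (hlength : l.length = 6) : (3 : ℤ) ∣ (formalBoundary sl3Bracket l).coeff (sl3Pivot j) := by
  revert j l
  decide +kernel

lemma isZeroMod_sl3Contraction (l : List (Fin 8)) (hl : l.SortedLT) (hlength : l.length = 5) :
    IsZeroMod 3 ((-1, l) :: ((formalBoundary sl3Bracket l).bind sl3Contraction ++
      (sl3Contraction l).bind (formalBoundary sl3Bracket) ++
        (ofFn fun i => if l = sl3Pivot i then 1 else 0).bind sl3Cycle)) := by
  revert l
  decide +kernel

end SpecialLinear

theorem H5_trivial_coeffs_dim_general (k : Type*) [Field k] [CharP k 3] :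
    Module.finrank k (ceH k (sl3 k) k 5) = 7 := by
  have : LieModule.IsTrivial (sl3 k) k := ⟨fun _ _ => rfl⟩
  exact finrank_ceH_succ_of_formalContraction 3 (sl3Basis k) (lie_sl3Basis k) sl3Contraction
    sl3Cycle sl3Pivot (by decide +kernel) isZeroMod_sl3Cycle_bind_formalBoundary
    (by decide +kernel) three_dvd_coeff_sl3Pivot_formalBoundary coeff_sl3Pivot_sl3Cycle
    isZeroMod_sl3Contraction

theorem H5_trivial_coeffs_dim (k : Type*) [Field k] [IsAlgClosed k] [CharP k 3] :
    Module.finrank k (ceH k (sl3 k) k 5) = 7 :=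
  H5_trivial_coeffs_dim_general k
end

section
/- Let k be an algebraically closed field of characteristic 3 and let g = sl_3(k) be the Lie algebra of traceless 3×3 matrices over k. Then the sixth Chevalley–Eilenberg cohomology of g with trivial coefficients satisfies dim_k H^6(g, k) = 6, while H^7(g, k) = 0. -/
/-! Cartan's formula `ι_x ∘ d = 𝓛_x - d ∘ ι_x`, with `𝓛_x` the Lie derivative and `ι_x` the
contraction, determines `d` by recursion on the degree, and all the identities for `d` follow from
it.

The pairing of `p`-forms with `q`-forms through a volume form, `p + q = dim L`, is invariant when
`tr ∘ ad = 0`, in particular when `L` is perfect. Hence `d` is up to sign its own transpose in the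
complementary degree, and `Hᵖ` and `H^q` have the same dimension. So `H⁷` of `sl₃` has the dimension
of `H¹`, which vanishes by perfectness, and `H⁶` has the dimension of `H²`.

In characteristic 3 the three roots of `E₀₁`, `E₁₂`, `E₂₀` coincide, so that for `i ≠ j` the form
`u_i ∧ v_j` is closed, where `u_i`, `v_j` are the coordinates along `E_{i,i+1}` and `E_{j+1,j}`.
A 2-cocycle can be normalized by a coboundary so that only its values on the commuting pairs
`(E_{i,i+1}, E_{j+1,j})` with `i ≠ j` remain; these values are arbitrary and give `dim H² = 6`. -/

namespace ChevalleyEilenberg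

open LieAlgebra.SpecialLinear

section AlternatingMaps

variable {R V W : Type*} [CommRing R] [AddCommGroup V] [Module R V] [AddCommGroup W] [Module R W]

lemma ext_curryLeft {n : ℕ} {ψ φ : V [⋀^Fin (n + 1)]→ₗ[R] W}
    (h : ∀ x, ψ.curryLeft x = φ.curryLeft x) : ψ = φ :=
  AlternatingMap.ext fun v => by
    rw [← Fin.cons_self_tail v]
    exact DFunLike.congr_fun (h (v 0)) (Fin.tail v)

lemma exists_curryLeft_eq {n : ℕ} (F : V →ₗ[R] V [⋀^Fin n]→ₗ[R] W)
    (hF : ∀ (x : V) (v : Fin n → V), x ∈ Set.range v → F x v = 0) :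
    ∃ ψ : V [⋀^Fin (n + 1)]→ₗ[R] W, ψ.curryLeft = F := by
  refine ⟨{ LinearMap.uncurryLeft (AlternatingMap.toMultilinearMapLM ∘ₗ F) with
    map_eq_zero_of_eq' := fun v i j hv hij => ?_ }, ?_⟩
  · change F (v 0) (Fin.tail v) = 0
    cases i using Fin.cases with
    | zero =>
      obtain ⟨j, rfl⟩ := Fin.exists_succ_eq.mpr hij.symm
      exact hF _ _ ⟨j, hv.symm⟩
    | succ i =>
      cases j using Fin.cases with
      | zero => exact hF _ _ ⟨i, hv⟩
      | succ j => exact (F (v 0)).map_eq_zero_of_eq _ hv fun h => hij (congrArg Fin.succ h)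
  · ext x v
    simp

lemma apply_eq_zero_of_mem_range {n : ℕ} {F : V →ₗ[R] V [⋀^Fin (n + 1)]→ₗ[R] W}
    (hF : ∀ x, (F x).curryLeft x = 0) {x : V} {v : Fin (n + 1) → V} (hx : x ∈ Set.range v) :
    F x v = 0 := by
  obtain ⟨i, rfl⟩ := hx
  rw [← Fin.insertNth_self_removeNth i v, AlternatingMap.map_insertNth,
    ← AlternatingMap.curryLeft_apply_apply, Fin.insertNth_apply_same, hF,
    AlternatingMap.zero_apply, smul_zero]

lemma neg_one_pow_smul_map_cons_succAbove {n : ℕ} (ψ : V [⋀^Fin (n + 1)]→ₗ[R] W)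
    (i : Fin (n + 1)) (x : V) (v : Fin (n + 1) → V) :
    (-1 : ℤ) ^ (i : ℕ) • ψ (Fin.cons x fun l => v (i.succAbove l)) =
      ψ (Function.update v i x) := by
  rw [← Fin.insertNth_removeNth, AlternatingMap.map_insertNth]
  rfl

lemma map_cons_cons_comm {n : ℕ} (ψ : V [⋀^Fin (n + 2)]→ₗ[R] W) (x y : V) (v : Fin n → V) :
    ψ (Fin.cons x (Fin.cons y v)) = -ψ (Fin.cons y (Fin.cons x v)) := by
  rw [← ψ.map_swap _ (Fin.zero_ne_one)]
  congr 1
  ext i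
  refine Fin.cases ?_ (Fin.cases ?_ fun i => ?_) i
  · simp
  · simp
  · rw [Function.comp_apply, Equiv.swap_apply_of_ne_of_ne (by simp) (by simp [Fin.ext_iff])]
    rfl

lemma sum_update_eq_zero_of_eq {ι : Type*} [Fintype ι] [DecidableEq ι] (f : V → V)
    (ψ : V [⋀^ι]→ₗ[R] W) {v : ι → V} {i j : ι} (hv : v i = v j) (hij : i ≠ j) :
    ∑ l, ψ (Function.update v l (f (v l))) = 0 := by
  have hswap : Function.update v j (f (v j)) =
      Function.update v i (f (v i)) ∘ Equiv.swap i j := by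
    ext l
    rcases eq_or_ne l i with rfl | hi
    · simp [hij, hij.symm, hv]
    · rcases eq_or_ne l j with rfl | hj
      · simp [hv]
      · simp [hi, hj, Equiv.swap_apply_of_ne_of_ne hi hj]
  rw [Fintype.sum_eq_add i j hij, hswap, ψ.map_swap _ hij, add_neg_cancel]
  rintro l ⟨hli, hlj⟩
  exact ψ.map_eq_zero_of_eq _ (by simp [hli.symm, hlj.symm, hv]) hij

lemma sum_compLinearMap_update_apply {ι : Type*} [Fintype ι] [DecidableEq ι] (f : V →ₗ[R] V)
    (ψ : MultilinearMap R (fun _ : ι => V) W) (v : ι → V) :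
    (∑ i, ψ.compLinearMap (Function.update (fun _ => LinearMap.id) i f)) v =
      ∑ i, ψ (Function.update v i (f (v i))) := by
  rw [sum_apply]
  refine Finset.sum_congr rfl fun i _ => congrArg ψ (funext fun j => ?_)
  rcases eq_or_ne j i with rfl | hj
  · simp
  · simp [hj]

/-- The form `∑ i, ψ (v₁, …, f vᵢ, …, vₙ)`: minus the derivation action of an endomorphism `f` on
alternating forms. -/
def endAction {ι : Type*} [Fintype ι] [DecidableEq ι] (f : V →ₗ[R] V) (ψ : V [⋀^ι]→ₗ[R] W) :
    V [⋀^ι]→ₗ[R] W where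
  toMultilinearMap :=
    ∑ i, ψ.toMultilinearMap.compLinearMap (Function.update (fun _ => LinearMap.id) i f)
  map_eq_zero_of_eq' v _ _ hv hij :=
    (sum_compLinearMap_update_apply f ψ.toMultilinearMap v).trans
      (sum_update_eq_zero_of_eq f ψ hv hij)

lemma endAction_apply {ι : Type*} [Fintype ι] [DecidableEq ι] (f : V →ₗ[R] V)
    (ψ : V [⋀^ι]→ₗ[R] W) (v : ι → V) :
    endAction f ψ v = ∑ i, ψ (Function.update v i (f (v i))) :=
  sum_compLinearMap_update_apply f ψ.toMultilinearMap v

lemma cons_succ_succAbove {α : Type*} {n : ℕ} (x : α) (v : Fin (n + 1) → α) (i : Fin (n + 1)) :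
    (fun l => (Fin.cons x v : Fin (n + 2) → α) (i.succ.succAbove l)) =
      Fin.cons x fun l => v (i.succAbove l) := by
  ext l
  cases l using Fin.cases <;> simp

lemma cons_succ_succAbove_succAbove {α : Type*} {n : ℕ} (x : α) (v : Fin (n + 2) → α)
    {i j : Fin (n + 2)} (hij : i < j) :
    (fun l => (Fin.cons x v : Fin (n + 3) → α) (i.succ.succAbove (j.succAbove l))) =
      Fin.cons x fun l => v (i.succAbove ((j.pred (Fin.ne_zero_of_lt hij)).succAbove l)) := by
  obtain ⟨j, rfl⟩ := Fin.exists_succ_eq.mpr (Fin.ne_zero_of_lt hij)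
  ext l
  cases l using Fin.cases <;> simp

end AlternatingMaps

section CartanCalculus

variable {k L M : Type*} [Field k] [LieRing L] [LieAlgebra k L]
  [AddCommGroup M] [Module k M] [LieRingModule L M] [LieModule k L M]

/-- The Lie derivative `𝓛_x ψ` of an `M`-valued alternating form along `x`, that is, the
natural action of the Lie algebra on its cochains. -/
def lieDerivative {ι : Type*} [Fintype ι] [DecidableEq ι] :
    L →ₗ[k] (L [⋀^ι]→ₗ[k] M) →ₗ[k] (L [⋀^ι]→ₗ[k] M) :=
  LinearMap.mk₂ k
    (fun x ψ => (LieModule.toEnd k L M x).compAlternatingMap ψ - endAction (LieAlgebra.ad k L x) ψ)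
    (fun x y ψ => by
      ext v
      simp only [map_add, LinearMap.add_compAlternatingMap, AlternatingMap.sub_apply,
        AlternatingMap.add_apply, LinearMap.compAlternatingMap_apply, endAction_apply,
        LinearMap.add_apply, AlternatingMap.map_update_add, Finset.sum_add_distrib]
      abel)
    (fun c x ψ => by
      ext v
      simp [endAction_apply, Finset.smul_sum, smul_sub])
    (fun x ψ φ => by
      ext v
      simp only [LinearMap.compAlternatingMap_add, AlternatingMap.sub_apply,
        AlternatingMap.add_apply, endAction_apply, Finset.sum_add_distrib]
      abel)
    (fun c x ψ => by
      ext v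
      simp [endAction_apply, Finset.smul_sum, smul_sub])

lemma lieDerivative_apply {ι : Type*} [Fintype ι] [DecidableEq ι] (x : L) (ψ : L [⋀^ι]→ₗ[k] M)
    (v : ι → L) :
    lieDerivative x ψ v = ⁅x, ψ v⁆ - ∑ i, ψ (Function.update v i ⁅x, v i⁆) :=
  congrArg (⁅x, ψ v⁆ - ·) (endAction_apply (LieAlgebra.ad k L x) ψ v)

variable {n : ℕ}

lemma curryLeft_lieDerivative (x y : L) (ψ : L [⋀^Fin (n + 1)]→ₗ[k] M) :
    (lieDerivative x ψ).curryLeft y =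
      lieDerivative x (ψ.curryLeft y) - ψ.curryLeft ⁅x, y⁆ := by
  ext v
  simp only [AlternatingMap.curryLeft_apply_apply, AlternatingMap.sub_apply, lieDerivative_apply,
    Fin.sum_univ_succ, Matrix.vecCons, Fin.cons_zero, Fin.cons_succ, Fin.update_cons_zero,
    ← Fin.cons_update]
  abel

lemma lieDerivative_lie (x y : L) (ψ : L [⋀^Fin n]→ₗ[k] M) :
    lieDerivative ⁅x, y⁆ ψ =
      lieDerivative x (lieDerivative y ψ) - lieDerivative y (lieDerivative x ψ) := by
  induction n with
  | zero =>
    ext v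
    simp [lieDerivative_apply]
  | succ n ih =>
    refine AlternatingMap.ext fun v => ?_
    rw [← Fin.cons_self_tail v]
    change (lieDerivative ⁅x, y⁆ ψ).curryLeft (v 0) (Fin.tail v) =
      (lieDerivative x (lieDerivative y ψ)).curryLeft (v 0) (Fin.tail v) -
        (lieDerivative y (lieDerivative x ψ)).curryLeft (v 0) (Fin.tail v)
    simp only [curryLeft_lieDerivative, ih, map_sub, lie_lie, AlternatingMap.sub_apply]
    abel

lemma ceD_cons (ψ : L [⋀^Fin (n + 1)]→ₗ[k] M) (x : L) (v : Fin (n + 1) → L) :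
    ceD k L M ψ (Fin.cons x v) = lieDerivative x ψ v - ceD k L M (ψ.curryLeft x) v := by
  simp only [lieDerivative_apply, ← neg_one_pow_smul_map_cons_succAbove]
  cases n with
  | zero =>
    have hx : (fun l : Fin 1 => (Fin.cons x v : Fin 2 → L) (Fin.succAbove 1 l)) = ![x] := by
      ext l
      fin_cases l
      rfl
    have expand : ceD k L M ψ (Fin.cons x v) =
        -ψ (Fin.cons ⁅x, v 0⁆ fun l => v (Fin.succAbove 0 l)) + (⁅x, ψ v⁆ + -⁅v 0, ψ ![x]⁆) := by
      simp [ceD, Fin.sum_univ_succ, hx]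
    have contraction : ceD k L M (ψ.curryLeft x) v = ⁅v 0, ψ ![x]⁆ := by simp [ceD]
    rw [expand, contraction, Fin.sum_univ_one, Fin.val_zero, pow_zero, one_smul]
    abel
  | succ n =>
    have bracket_term (i j : Fin (n + 2)) :
        (if i < j then (-1 : ℤ) ^ (i.val + 1 + (j.val + 1)) • ψ (Fin.cons ⁅v i, v j⁆
            fun l => (Fin.cons x v : Fin (n + 3) → L) (i.succ.succAbove (j.succAbove l)))
          else 0) =
        -if h : i < j then (-1 : ℤ) ^ (i.val + j.val) • ψ (Fin.cons x (Fin.cons ⁅v i, v j⁆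
            fun l => v (i.succAbove ((j.pred (Fin.ne_zero_of_lt h)).succAbove l))))
          else 0 := by
      split_ifs with hij
      · rw [cons_succ_succAbove_succAbove x v hij, map_cons_cons_comm, smul_neg,
          add_add_add_comm, pow_add _ _ (1 + 1), Even.neg_one_pow (n := 1 + 1) (by decide), mul_one]
      · rw [neg_zero]
    simp only [ceD, Fin.sum_univ_succ (n := n + 2), Fin.succ_lt_succ_iff]
    simp only [lt_self_iff_false, ↓reduceDIte, Fin.succ_pos, Fin.coe_ofNat_eq_mod, Nat.zero_mod,
      Fin.val_succ, zero_add, pow_succ, mul_neg, mul_one, Fin.cons_zero, Fin.cons_succ,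
      Fin.pred_succ, Fin.zero_succAbove, neg_smul, Finset.sum_neg_distrib, not_lt_zero,
      dite_eq_ite, bracket_term, pow_zero, one_smul, cons_succ_succAbove,
      AlternatingMap.curryLeft_apply_apply, Matrix.vecCons]
    abel

lemma ceD_cons_of_degree_zero (ψ : L [⋀^Fin 0]→ₗ[k] M) (x : L) (v : Fin 0 → L) :
    ceD k L M ψ (Fin.cons x v) = lieDerivative x ψ v := by
  simp [lieDerivative_apply, ceD, Subsingleton.elim v ![]]

lemma ceD_cons_cons_self (ψ : L [⋀^Fin (n + 1)]→ₗ[k] M) (x : L) (v : Fin n → L) :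
    ceD k L M ψ (Fin.cons x (Fin.cons x v)) = 0 := by
  have lie_contraction : lieDerivative x ψ (Fin.cons x v) = lieDerivative x (ψ.curryLeft x) v := by
    change (lieDerivative x ψ).curryLeft x v = _
    rw [curryLeft_lieDerivative, lie_self, map_zero, sub_zero]
  rw [ceD_cons, lie_contraction]
  cases n with
  | zero => rw [ceD_cons_of_degree_zero, sub_self]
  | succ n => rw [ceD_cons, AlternatingMap.curryLeft_same, ceD_zero, sub_zero, sub_self]

/-- Cartan's formula builds `dψ` by recursion on the degree, since it prescribes the contractions
`ι_x dψ = 𝓛_x ψ - d (ι_x ψ)`, and these satisfy `ι_x ι_x dψ = 0`. -/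
lemma exists_alternatingMap_eq_ceD (ψ : L [⋀^Fin n]→ₗ[k] M) :
    ∃ Φ : L [⋀^Fin (n + 1)]→ₗ[k] M, ∀ v, Φ v = ceD k L M ψ v := by
  induction n with
  | zero =>
    obtain ⟨Φ, hΦ⟩ := exists_curryLeft_eq (lieDerivative.flip ψ) fun x v hx => by simp at hx
    refine ⟨Φ, fun v => ?_⟩
    rw [← Fin.cons_self_tail v]
    calc Φ.curryLeft (v 0) (Fin.tail v) = lieDerivative (v 0) ψ (Fin.tail v) := by
          rw [hΦ, LinearMap.flip_apply]
      _ = ceD k L M ψ (Fin.cons (v 0) (Fin.tail v)) := by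
          rw [ceD_cons_of_degree_zero]
  | succ n ih =>
    choose d hd using fun φ : L [⋀^Fin n]→ₗ[k] M => ih φ
    have d_add (φ χ) : d (φ + χ) = d φ + d χ := by ext v; simp [hd, ceD_add]
    have d_smul (c : k) (φ) : d (c • φ) = c • d φ := by ext v; simp [hd, ceD_smul]
    let contraction : L →ₗ[k] L [⋀^Fin (n + 1)]→ₗ[k] M :=
      lieDerivative.flip ψ - LinearMap.mk ⟨d, d_add⟩ d_smul ∘ₗ ψ.curryLeft
    have contraction_apply (x v) : contraction x v = ceD k L M ψ (Fin.cons x v) := by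
      rw [ceD_cons, ← hd]
      rfl
    have contraction_self (x) : (contraction x).curryLeft x = 0 :=
      AlternatingMap.ext fun v => (contraction_apply x _).trans (ceD_cons_cons_self ψ x v)
    obtain ⟨Φ, hΦ⟩ := exists_curryLeft_eq contraction
      fun x v hx => apply_eq_zero_of_mem_range contraction_self hx
    refine ⟨Φ, fun v => ?_⟩
    rw [← Fin.cons_self_tail v, ← contraction_apply, ← hΦ]
    rfl

/-- The Chevalley–Eilenberg differential as a linear map between spaces of alternating maps. -/
noncomputable def ceDiff : (L [⋀^Fin n]→ₗ[k] M) →ₗ[k] (L [⋀^Fin (n + 1)]→ₗ[k] M) where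
  toFun ψ := (exists_alternatingMap_eq_ceD ψ).choose
  map_add' ψ φ := AlternatingMap.ext fun v => by
    rw [AlternatingMap.add_apply, (exists_alternatingMap_eq_ceD (ψ + φ)).choose_spec,
      (exists_alternatingMap_eq_ceD ψ).choose_spec, (exists_alternatingMap_eq_ceD φ).choose_spec,
      ceD_add]
  map_smul' c ψ := AlternatingMap.ext fun v => by
    rw [RingHom.id_apply, AlternatingMap.smul_apply,
      (exists_alternatingMap_eq_ceD (c • ψ)).choose_spec,
      (exists_alternatingMap_eq_ceD ψ).choose_spec, ceD_smul]

lemma ceDiff_apply (ψ : L [⋀^Fin n]→ₗ[k] M) (v : Fin (n + 1) → L) :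
    ceDiff ψ v = ceD k L M ψ v :=
  (exists_alternatingMap_eq_ceD ψ).choose_spec v

lemma curryLeft_ceDiff (ψ : L [⋀^Fin (n + 1)]→ₗ[k] M) (x : L) :
    (ceDiff ψ).curryLeft x = lieDerivative x ψ - ceDiff (ψ.curryLeft x) := by
  ext v
  rw [AlternatingMap.curryLeft_apply_apply, AlternatingMap.sub_apply, ceDiff_apply, ceDiff_apply,
    ← ceD_cons]
  rfl

lemma curryLeft_ceDiff_of_degree_zero (ψ : L [⋀^Fin 0]→ₗ[k] M) (x : L) :
    (ceDiff ψ).curryLeft x = lieDerivative x ψ := by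
  ext v
  rw [AlternatingMap.curryLeft_apply_apply, ceDiff_apply, ← ceD_cons_of_degree_zero]
  rfl

lemma lieDerivative_ceDiff (x : L) (ψ : L [⋀^Fin n]→ₗ[k] M) :
    lieDerivative x (ceDiff ψ) = ceDiff (lieDerivative x ψ) := by
  induction n with
  | zero =>
    refine ext_curryLeft fun y => ?_
    simp only [curryLeft_lieDerivative, curryLeft_ceDiff_of_degree_zero, lieDerivative_lie]
    abel
  | succ n ih =>
    refine ext_curryLeft fun y => ?_
    simp only [curryLeft_lieDerivative, curryLeft_ceDiff, lieDerivative_lie, map_sub, ih]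
    abel

lemma ceDiff_ceDiff (ψ : L [⋀^Fin n]→ₗ[k] M) : ceDiff (ceDiff ψ) = 0 := by
  induction n with
  | zero =>
    refine ext_curryLeft fun x => ?_
    rw [curryLeft_ceDiff, curryLeft_ceDiff_of_degree_zero, lieDerivative_ceDiff, sub_self,
      AlternatingMap.curryLeft_zero, LinearMap.zero_apply]
  | succ n ih =>
    refine ext_curryLeft fun x => ?_
    rw [curryLeft_ceDiff, curryLeft_ceDiff, map_sub, lieDerivative_ceDiff, ih, sub_zero, sub_self,
      AlternatingMap.curryLeft_zero, LinearMap.zero_apply]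

lemma ceZ_eq_ker : ceZ k L M n = LinearMap.ker ceDiff := by
  ext ψ
  simp only [LinearMap.mem_ker, AlternatingMap.ext_iff, ceDiff_apply]
  rfl

lemma ceB_succ_eq_range : ceB k L M (n + 1) = LinearMap.range ceDiff := by
  ext ψ
  simp only [LinearMap.mem_range, AlternatingMap.ext_iff, ceDiff_apply]
  exact exists_congr fun φ => forall_congr' fun v => eq_comm

lemma ceB_le_ceZ : ceB k L M n ≤ ceZ k L M n := by
  cases n with
  | zero => exact bot_le
  | succ n =>
    rw [ceB_succ_eq_range, ceZ_eq_ker, LinearMap.range_le_ker_iff]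
    exact LinearMap.ext ceDiff_ceDiff

end CartanCalculus

section Currying

variable {R V W ι κ : Type*} [CommRing R] [AddCommGroup V] [Module R V] [AddCommGroup W]
  [Module R W]

/-- Evaluation of alternating maps at a fixed tuple. -/
def evalAt (v : ι → V) : (V [⋀^ι]→ₗ[R] W) →ₗ[R] W where
  toFun ψ := ψ v
  map_add' _ _ := rfl
  map_smul' _ _ := rfl

lemma evalAt_apply (v : ι → V) (ψ : V [⋀^ι]→ₗ[R] W) : evalAt v ψ = ψ v := rfl

/-- The partial evaluation `w ↦ (v ↦ ω (w, v))` of an alternating map, as an alternating map with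
values in alternating maps. -/
def currySum (ω : V [⋀^ι ⊕ κ]→ₗ[R] W) : V [⋀^ι]→ₗ[R] (V [⋀^κ]→ₗ[R] W) where
  toFun w :=
    { ω.toMultilinearMap.currySum w with
      map_eq_zero_of_eq' v i j hv hij :=
        ω.map_eq_zero_of_eq (Sum.elim w v) (i := .inr i) (j := .inr j) hv
          (Sum.inr_injective.ne hij) }
  map_update_add' w i x y := AlternatingMap.ext fun v =>
    DFunLike.congr_fun (ω.toMultilinearMap.currySum.map_update_add w i x y) v
  map_update_smul' w i c x := AlternatingMap.ext fun v =>
    DFunLike.congr_fun (ω.toMultilinearMap.currySum.map_update_smul w i c x) v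
  map_eq_zero_of_eq' w i j hw hij := AlternatingMap.ext fun v =>
    ω.map_eq_zero_of_eq (Sum.elim w v) (i := .inl i) (j := .inl j) hw (Sum.inl_injective.ne hij)

lemma currySum_apply (ω : V [⋀^ι ⊕ κ]→ₗ[R] W) (w : ι → V) (v : κ → V) :
    currySum ω w v = ω (Sum.elim w v) := rfl

/-- Moves the first of the left-hand indices to the first position on the right. -/
def shiftEquiv (p q : ℕ) : Fin (p + 1) ⊕ Fin q ≃ Fin p ⊕ Fin (q + 1) where
  toFun := Sum.elim (Fin.cons (Sum.inr 0) Sum.inl) (Sum.inr ∘ Fin.succ)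
  invFun := Sum.elim (Sum.inl ∘ Fin.succ) (Fin.cons (Sum.inl 0) Sum.inr)
  left_inv := by rintro (i | i) <;> [cases i using Fin.cases; skip] <;> rfl
  right_inv := by rintro (i | i) <;> [skip; cases i using Fin.cases] <;> rfl

lemma currySum_cons {p q : ℕ} (ω : V [⋀^Fin (p + 1) ⊕ Fin q]→ₗ[R] W) (x : V) (w : Fin p → V) :
    currySum ω (Fin.cons x w) = (currySum (ω.domDomCongr (shiftEquiv p q)) w).curryLeft x := by
  ext v
  refine congrArg ω (funext fun i => ?_)
  rcases i with i | i
  · cases i using Fin.cases <;> rfl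
  · rfl

end Currying

section Finrank

variable {k V : Type*} [Field k] [AddCommGroup V] [Module k V] [FiniteDimensional k V]

instance finite_alternatingMap {ι : Type*} [Finite ι] : Module.Finite k (V [⋀^ι]→ₗ[k] k) :=
  Module.Finite.of_injective (AlternatingMap.toMultilinearMapLM (S := k))
    AlternatingMap.coe_multilinearMap_injective

lemma finrank_alternatingMap (n : ℕ) :
    Module.finrank k (V [⋀^Fin n]→ₗ[k] k) = (Module.finrank k V).choose n := by
  rw [exteriorPower.alternatingMapLinearEquiv.finrank_eq, Subspace.dual_finrank_eq,
    exteriorPower.finrank_eq]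

lemma alternatingMap_eq_zero_of_finrank_lt {W ι : Type*} [AddCommGroup W] [Module k W] [Fintype ι]
    (h : Module.finrank k V < Fintype.card ι) (ψ : V [⋀^ι]→ₗ[k] W) : ψ = 0 :=
  AlternatingMap.ext fun v => ψ.map_linearDependent v fun hv =>
    h.not_ge hv.fintype_card_le_finrank

end Finrank

section Nondegeneracy

variable {k V ι : Type*} [Field k] [AddCommGroup V] [Module k V] {p q : ℕ}

lemma apply_orderEmb_eq_zero_of_ne [Fintype ι] [LinearOrder ι] (b : ι → V)
    (ω : V [⋀^Fin p ⊕ Fin q]→ₗ[k] k) {s t : Finset ι} (hs : s.card = p) (ht : t.card = p)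
    (htc : tᶜ.card = q) (hst : s ≠ t) :
    ω (Sum.elim (b ∘ s.orderEmbOfFin hs) (b ∘ tᶜ.orderEmbOfFin htc)) = 0 := by
  obtain ⟨i, his, hit⟩ : ∃ i ∈ s, i ∉ t := Finset.not_subset.mp fun h =>
    hst (Finset.eq_of_subset_of_card_le h (by rw [hs, ht]))
  obtain ⟨a, ha⟩ : i ∈ Set.range (s.orderEmbOfFin hs) := by simpa using his
  obtain ⟨c, hc⟩ : i ∈ Set.range (tᶜ.orderEmbOfFin htc) := by simpa using hit
  refine ω.map_eq_zero_of_eq _ ?_ (Sum.inl_ne_inr (a := a) (b := c))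
  simp [ha, hc]

lemma apply_orderEmb_ne_zero [Fintype ι] [LinearOrder ι] (b : Module.Basis ι k V)
    {ω : V [⋀^Fin p ⊕ Fin q]→ₗ[k] k} (hω : ω ≠ 0) {s : Finset ι} (hs : s.card = p)
    (hsc : sᶜ.card = q) :
    ω (Sum.elim (b ∘ s.orderEmbOfFin hs) (b ∘ sᶜ.orderEmbOfFin hsc)) ≠ 0 := by
  convert (ω.map_basis_ne_zero_iff (b.reindex (finSumEquivOfFinset hs hsc).symm)).mpr hω using 2
  ext (i | i) <;> simp

lemma span_range_currySum [FiniteDimensional k V] {ω : V [⋀^Fin p ⊕ Fin q]→ₗ[k] k}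
    (hω : ω ≠ 0) (hpq : p + q = Module.finrank k V) :
    Submodule.span k (Set.range (currySum ω)) = ⊤ := by
  let b := Module.finBasis k V
  let S := {s : Finset (Fin (Module.finrank k V)) // s.card = p}
  have card_compl (s : S) : s.1ᶜ.card = q := by
    rw [Finset.card_compl, s.2, Fintype.card_fin, ← hpq, Nat.add_sub_cancel_left]
  let form (s : S) : V [⋀^Fin q]→ₗ[k] k := currySum ω (b ∘ s.1.orderEmbOfFin s.2)
  let point (t : S) : Fin q → V := b ∘ t.1ᶜ.orderEmbOfFin (card_compl t)
  have form_point_ne_zero (s : S) : form s (point s) ≠ 0 :=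
    apply_orderEmb_ne_zero b hω s.2 (card_compl s)
  have form_independent : LinearIndependent k form :=
    .of_pairwise_dual_eq_zero_one form (fun t => (form t (point t))⁻¹ • evalAt (point t))
      (fun t s hts => by
        simp only [LinearMap.smul_apply, evalAt_apply, form, currySum_apply, point, smul_eq_mul,
          apply_orderEmb_eq_zero_of_ne b ω s.2 t.2 _ (Subtype.coe_injective.ne hts.symm), mul_zero])
      fun s => inv_mul_cancel₀ (form_point_ne_zero s)
  have form_spans : Submodule.span k (Set.range form) = ⊤ :=
    form_independent.span_eq_top_of_card_eq_finrank' <| by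
      rw [Fintype.card_finset_len, finrank_alternatingMap, Fintype.card_fin, ← hpq,
        Nat.choose_symm_add]
  exact top_le_iff.mp (form_spans.ge.trans (Submodule.span_mono (Set.range_comp_subset_range _ _)))

end Nondegeneracy

section Dual

variable {k V : Type*} [Field k] [AddCommGroup V] [Module k V] {p q : ℕ}

/-- The map `λ ↦ λ ∘ currySum ω` from functionals on `q`-forms to `p`-forms. It is an isomorphism
when `ω` is a volume form on a space of dimension `p + q`, and this is the duality that pairs
cochains in complementary degrees. -/
def dualToForm (ω : V [⋀^Fin p ⊕ Fin q]→ₗ[k] k) :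
    Module.Dual k (V [⋀^Fin q]→ₗ[k] k) →ₗ[k] (V [⋀^Fin p]→ₗ[k] k) where
  toFun l := l.compAlternatingMap (currySum ω)
  map_add' _ _ := rfl
  map_smul' _ _ := rfl

lemma dualToForm_apply (ω : V [⋀^Fin p ⊕ Fin q]→ₗ[k] k)
    (l : Module.Dual k (V [⋀^Fin q]→ₗ[k] k)) (w : Fin p → V) :
    dualToForm ω l w = l (currySum ω w) := rfl

lemma dualToForm_bijective [FiniteDimensional k V] {ω : V [⋀^Fin p ⊕ Fin q]→ₗ[k] k}
    (hω : ω ≠ 0) (hpq : p + q = Module.finrank k V) : Function.Bijective (dualToForm ω) := by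
  have injective : Function.Injective (dualToForm ω) := by
    refine (injective_iff_map_eq_zero _).mpr fun l hl => ?_
    refine LinearMap.ext_on_range (span_range_currySum hω hpq) fun w => ?_
    exact DFunLike.congr_fun hl w
  have finrank_eq : Module.finrank k (Module.Dual k (V [⋀^Fin q]→ₗ[k] k)) =
      Module.finrank k (V [⋀^Fin p]→ₗ[k] k) := by
    rw [Subspace.dual_finrank_eq, finrank_alternatingMap, finrank_alternatingMap, ← hpq,
      Nat.choose_symm_add]
  exact ⟨injective, (LinearMap.injective_iff_surjective_of_finrank_eq_finrank finrank_eq).mp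
    injective⟩

end Dual

section Trace

variable {R V W ι : Type*} [CommRing R] [AddCommGroup V] [Module R V] [AddCommGroup W]
  [Module R W] [DecidableEq ι]

lemma map_update_basis [Finite ι] (b : Module.Basis ι R V) (ω : V [⋀^ι]→ₗ[R] W) (i : ι) (y : V) :
    ω (Function.update b i y) = b.repr y i • ω b := by
  have := Fintype.ofFinite ι
  conv_lhs => rw [← b.sum_repr y]
  rw [AlternatingMap.map_update_sum, Fintype.sum_eq_single i fun j hj => ?_]
  · rw [AlternatingMap.map_update_smul, Function.update_eq_self]
  · rw [AlternatingMap.map_update_smul, ω.map_update_self _ hj.symm, smul_zero]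

lemma endAction_top_form [Fintype ι] (b : Module.Basis ι R V) (f : V →ₗ[R] V) (ω : V [⋀^ι]→ₗ[R] R) :
    endAction f ω = LinearMap.trace R V f • ω := by
  rw [← sub_eq_zero, ← AlternatingMap.map_basis_eq_zero_iff b, AlternatingMap.sub_apply,
    AlternatingMap.smul_apply, endAction_apply, LinearMap.trace_eq_matrix_trace R b, sub_eq_zero,
    Matrix.trace, Finset.sum_smul]
  refine Finset.sum_congr rfl fun i _ => ?_
  rw [map_update_basis, Matrix.diag_apply, LinearMap.toMatrix_apply]

end Trace

section Contraction

variable {R V W : Type*} [CommRing R] [AddCommGroup V] [Module R V] [AddCommGroup W] [Module R W]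

/-- The contraction `ι_x` of alternating maps with a vector. -/
def contract {n : ℕ} (x : V) : (V [⋀^Fin (n + 1)]→ₗ[R] W) →ₗ[R] (V [⋀^Fin n]→ₗ[R] W) :=
  AlternatingMap.curryLeftLinearMap.flip x

lemma currySum_endAction {ι κ : Type*} [Fintype ι] [DecidableEq ι] [Fintype κ] [DecidableEq κ]
    (f : V →ₗ[R] V) (ω : V [⋀^ι ⊕ κ]→ₗ[R] W) (w : ι → V) :
    currySum (endAction f ω) w = endAction f (currySum ω) w + endAction f (currySum ω w) := by
  ext v
  rw [AlternatingMap.add_apply, ← evalAt_apply v (endAction f (currySum ω) w)]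
  simp only [currySum_apply, endAction_apply, Fintype.sum_sum_type, map_sum, evalAt_apply,
    Sum.update_elim_inl, Sum.update_elim_inr, Sum.elim_inl, Sum.elim_inr]

end Contraction

section PoincareDuality

variable {k L : Type*} [Field k] [LieRing L] [LieAlgebra k L] {p q : ℕ}

lemma curryLeft_dualToForm (ω : L [⋀^Fin (p + 1) ⊕ Fin q]→ₗ[k] k)
    (l : Module.Dual k (L [⋀^Fin q]→ₗ[k] k)) (x : L) :
    (dualToForm ω l).curryLeft x =
      dualToForm (ω.domDomCongr (shiftEquiv p q)) (l ∘ₗ contract x) :=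
  AlternatingMap.ext fun w => congrArg l (currySum_cons ω x w)

variable [LieRingModule L k] [LieModule k L k]

lemma ceDiff_comp_contract (x : L) :
    ceDiff ∘ₗ contract x =
      lieDerivative x - contract x ∘ₗ (ceDiff : (L [⋀^Fin (p + 1)]→ₗ[k] k) →ₗ[k] _) := by
  refine LinearMap.ext fun ψ => ?_
  have cartan : contract x (ceDiff ψ) = lieDerivative x ψ - ceDiff (contract x ψ) :=
    curryLeft_ceDiff ψ x
  rw [LinearMap.sub_apply, LinearMap.comp_apply, LinearMap.comp_apply, cartan, sub_sub_cancel]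

lemma finrank_ceH_add [FiniteDimensional k L] (n : ℕ) :
    Module.finrank k (ceH k L k n) + (Module.finrank k (ceB k L k n) +
      Module.finrank k (LinearMap.range (ceDiff : (L [⋀^Fin n]→ₗ[k] k) →ₗ[k] _))) =
    (Module.finrank k L).choose n := by
  have quotient : Module.finrank k (ceH k L k n) + Module.finrank k (ceB k L k n) =
      Module.finrank k (ceZ k L k n) := by
    rw [← (Submodule.comapSubtypeEquivOfLe ceB_le_ceZ).finrank_eq]
    exact Submodule.finrank_quotient_add_finrank _
  rw [← add_assoc, quotient, ceZ_eq_ker, add_comm, LinearMap.finrank_range_add_finrank_ker,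
    finrank_alternatingMap]

variable [LieModule.IsTrivial L k]

lemma lieDerivative_eq_neg_endAction {ι : Type*} [Fintype ι] [DecidableEq ι] (x : L)
    (ψ : L [⋀^ι]→ₗ[k] k) : lieDerivative x ψ = -endAction (LieAlgebra.ad k L x) ψ := by
  ext v
  rw [lieDerivative_apply, trivial_lie_zero, zero_sub, AlternatingMap.neg_apply, endAction_apply]
  rfl

lemma ceDiff_eq_zero_of_degree_zero : (ceDiff : (L [⋀^Fin 0]→ₗ[k] k) →ₗ[k] _) = 0 := by
  ext ψ v
  rw [ceDiff_apply, ceD, trivial_lie_zero]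
  rfl

lemma lieDerivative_dualToForm {ω : L [⋀^Fin p ⊕ Fin q]→ₗ[k] k} {x : L}
    (hω : lieDerivative x ω = 0) (l : Module.Dual k (L [⋀^Fin q]→ₗ[k] k)) :
    lieDerivative x (dualToForm ω l) = -dualToForm ω (l ∘ₗ lieDerivative x) := by
  ext w
  set f := LieAlgebra.ad k L x
  have endAction_eq_zero : endAction f ω = 0 := by
    rwa [lieDerivative_eq_neg_endAction, neg_eq_zero] at hω
  have invariance : endAction f (currySum ω) w = -endAction f (currySum ω w) := by
    rw [eq_neg_iff_add_eq_zero, ← currySum_endAction, endAction_eq_zero]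
    rfl
  have endAction_dualToForm : endAction f (dualToForm ω l) w = l (endAction f (currySum ω) w) := by
    simp only [endAction_apply, map_sum, dualToForm_apply]
  rw [AlternatingMap.neg_apply, dualToForm_apply, LinearMap.comp_apply,
    lieDerivative_eq_neg_endAction, lieDerivative_eq_neg_endAction, AlternatingMap.neg_apply,
    endAction_dualToForm, invariance]

variable [FiniteDimensional k L]

lemma lieDerivative_top_form {ι : Type*} [Fintype ι] [DecidableEq ι] {x : L}
    (hx : LinearMap.trace k L (LieAlgebra.ad k L x) = 0)
    (hι : Fintype.card ι = Module.finrank k L) (ω : L [⋀^ι]→ₗ[k] k) : lieDerivative x ω = 0 := by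
  rw [lieDerivative_eq_neg_endAction,
    endAction_top_form ((Module.finBasis k L).reindex (Fintype.equivFinOfCardEq hι).symm), hx,
    zero_smul, neg_zero]

lemma ceDiff_dualToForm (hL : ∀ x : L, LinearMap.trace k L (LieAlgebra.ad k L x) = 0)
    (hpq : p + 1 + q = Module.finrank k L) (ω : L [⋀^Fin (p + 1) ⊕ Fin q]→ₗ[k] k)
    (l : Module.Dual k (L [⋀^Fin (q + 1)]→ₗ[k] k)) :
    ceDiff (dualToForm (ω.domDomCongr (shiftEquiv p q)) l) = -dualToForm ω (l ∘ₗ ceDiff) := by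
  induction p generalizing q with
  | zero =>
    have top_degree_eq_zero (x : L) : (ceDiff ∘ₗ contract x :
        (L [⋀^Fin (q + 1)]→ₗ[k] k) →ₗ[k] _) = 0 := by
      ext1 ψ
      rw [ceDiff_comp_contract, LinearMap.sub_apply, LinearMap.comp_apply,
        alternatingMap_eq_zero_of_finrank_lt (by simp; omega) (ceDiff ψ),
        lieDerivative_top_form (hL x) (by simp; omega), map_zero, sub_zero, LinearMap.zero_apply]
    rw [ceDiff_eq_zero_of_degree_zero, LinearMap.zero_apply, eq_comm, neg_eq_zero]
    refine ext_curryLeft fun x => ?_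
    rw [curryLeft_dualToForm, LinearMap.comp_assoc, top_degree_eq_zero, LinearMap.comp_zero,
      map_zero, AlternatingMap.curryLeft_zero, LinearMap.zero_apply]
  | succ p ih =>
    refine ext_curryLeft fun x => ?_
    set ω' := ω.domDomCongr (shiftEquiv (p + 1) q)
    have invariance : lieDerivative x ω' = 0 :=
      lieDerivative_top_form (hL x) (by simp; omega) ω'
    calc (ceDiff (dualToForm ω' l)).curryLeft x
        = lieDerivative x (dualToForm ω' l) -
            ceDiff (dualToForm (ω'.domDomCongr (shiftEquiv p (q + 1))) (l ∘ₗ contract x)) := by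
          rw [curryLeft_ceDiff, curryLeft_dualToForm]
      _ = -dualToForm ω' (l ∘ₗ (lieDerivative x - contract x ∘ₗ ceDiff)) := by
          rw [lieDerivative_dualToForm invariance, ih (by omega), LinearMap.comp_sub, map_sub,
            LinearMap.comp_assoc, neg_sub_neg, neg_sub]
      _ = -(dualToForm ω (l ∘ₗ ceDiff)).curryLeft x := by
          rw [curryLeft_dualToForm, LinearMap.comp_assoc, ceDiff_comp_contract]

lemma finrank_range_ceDiff (hL : ∀ x : L, LinearMap.trace k L (LieAlgebra.ad k L x) = 0)
    (hpq : p + 1 + q = Module.finrank k L) :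
    Module.finrank k (LinearMap.range (ceDiff : (L [⋀^Fin p]→ₗ[k] k) →ₗ[k] _)) =
      Module.finrank k (LinearMap.range (ceDiff : (L [⋀^Fin q]→ₗ[k] k) →ₗ[k] _)) := by
  obtain ⟨ω, hω⟩ : ∃ ω : L [⋀^Fin (p + 1) ⊕ Fin q]→ₗ[k] k, ω ≠ 0 :=
    ⟨_, ((Module.finBasis k L).reindex (finSumFinEquiv.trans (finCongr hpq)).symm).det_ne_zero⟩
  have shift_ne_zero : ω.domDomCongr (shiftEquiv p q) ≠ 0 := by
    rwa [Ne, AlternatingMap.domDomCongr_eq_zero_iff]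
  let D := LinearEquiv.ofBijective (dualToForm ω) (dualToForm_bijective hω hpq)
  let D' := LinearEquiv.ofBijective (dualToForm (ω.domDomCongr (shiftEquiv p q)))
    (dualToForm_bijective shift_ne_zero (by omega))
  have conjugate : (ceDiff : (L [⋀^Fin p]→ₗ[k] k) →ₗ[k] _) ∘ₗ D'.toLinearMap =
      D.toLinearMap ∘ₗ (-(ceDiff : (L [⋀^Fin q]→ₗ[k] k) →ₗ[k] _).dualMap) :=
    LinearMap.ext fun l => (ceDiff_dualToForm hL hpq ω l).trans (map_neg D _).symm
  rw [← D'.range_comp, conjugate, LinearMap.range_comp, LinearEquiv.finrank_map_eq,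
    LinearMap.range_neg, LinearMap.finrank_range_dualMap_eq_finrank_range]

lemma finrank_ceB (hL : ∀ x : L, LinearMap.trace k L (LieAlgebra.ad k L x) = 0)
    (hpq : p + q = Module.finrank k L) :
    Module.finrank k (ceB k L k p) =
      Module.finrank k (LinearMap.range (ceDiff : (L [⋀^Fin q]→ₗ[k] k) →ₗ[k] _)) := by
  cases p with
  | zero =>
    have top_degree_eq_zero : (ceDiff : (L [⋀^Fin q]→ₗ[k] k) →ₗ[k] _) = 0 :=
      LinearMap.ext fun ψ => alternatingMap_eq_zero_of_finrank_lt (by simp; omega) _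
    rw [top_degree_eq_zero, LinearMap.range_zero, finrank_bot]
    exact finrank_bot k _
  | succ p => rw [ceB_succ_eq_range, finrank_range_ceDiff hL hpq]

theorem poincare_duality (hL : ∀ x : L, LinearMap.trace k L (LieAlgebra.ad k L x) = 0)
    (hpq : p + q = Module.finrank k L) :
    Module.finrank k (ceH k L k p) = Module.finrank k (ceH k L k q) := by
  have euler_p := finrank_ceH_add (k := k) (L := L) p
  have euler_q := finrank_ceH_add (k := k) (L := L) q
  rw [finrank_ceB hL hpq] at euler_p
  rw [finrank_ceB hL ((add_comm q p).trans hpq), ← Nat.choose_symm_of_eq_add hpq.symm] at euler_q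
  omega

end PoincareDuality

section LowDegree

variable {k L : Type*} [Field k] [LieRing L] [LieAlgebra k L] [LieRingModule L k]
  [LieModule k L k] [LieModule.IsTrivial L k]

lemma lieDerivative_one_apply (φ : L [⋀^Fin 1]→ₗ[k] k) (x y : L) :
    lieDerivative x φ ![y] = -φ ![⁅x, y⁆] := by
  rw [lieDerivative_apply, trivial_lie_zero, zero_sub, Fin.sum_univ_one]
  exact congrArg (-φ ·) (Fin.update_cons_zero (α := fun _ => L) y ![] _)

lemma ceDiff_one_apply (φ : L [⋀^Fin 1]→ₗ[k] k) (x y : L) :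
    ceDiff φ ![x, y] = -φ ![⁅x, y⁆] := by
  change (ceDiff φ).curryLeft x ![y] = _
  rw [curryLeft_ceDiff, ceDiff_eq_zero_of_degree_zero, LinearMap.zero_apply, sub_zero,
    lieDerivative_one_apply]

lemma lieDerivative_two_apply (f : L [⋀^Fin 2]→ₗ[k] k) (x y z : L) :
    lieDerivative x f ![y, z] = -f ![⁅x, y⁆, z] - f ![y, ⁅x, z⁆] := by
  change (lieDerivative x f).curryLeft y ![z] = _
  rw [curryLeft_lieDerivative, AlternatingMap.sub_apply, lieDerivative_one_apply, neg_sub_comm]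
  rfl

lemma ceDiff_two_apply (f : L [⋀^Fin 2]→ₗ[k] k) (x y z : L) :
    ceDiff f ![x, y, z] = f ![x, ⁅y, z⁆] - f ![⁅x, y⁆, z] - f ![y, ⁅x, z⁆] := by
  change (ceDiff f).curryLeft x ![y, z] = _
  rw [curryLeft_ceDiff, AlternatingMap.sub_apply, lieDerivative_two_apply, ceDiff_one_apply]
  change _ - -f ![x, ⁅y, z⁆] = _
  ring

end LowDegree

section Perfect

variable {k L : Type*} [Field k] [LieRing L] [LieAlgebra k L]

lemma eq_zero_of_forall_lie_eq_zero {W : Type*} [AddCommGroup W] [Module k W]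
    (hL : ⁅(⊤ : LieIdeal k L), (⊤ : LieIdeal k L)⁆ = ⊤) {f : L →ₗ[k] W}
    (hf : ∀ x y : L, f ⁅x, y⁆ = 0) : f = 0 := by
  have range_le_ker : (⊤ : Submodule k L) ≤ LinearMap.ker f := by
    rw [← LieSubmodule.top_toSubmodule (R := k) (L := L) (M := L), ← hL,
      LieSubmodule.lieIdeal_oper_eq_linear_span', Submodule.span_le]
    rintro _ ⟨x, -, y, -, rfl⟩
    exact hf x y
  exact LinearMap.ker_eq_top.mp (top_le_iff.mp range_le_ker)

lemma trace_ad_eq_zero_of_perfect (hL : ⁅(⊤ : LieIdeal k L), (⊤ : LieIdeal k L)⁆ = ⊤) (x : L) :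
    LinearMap.trace k L (LieAlgebra.ad k L x) = 0 := by
  let traceAd : L →ₗ[k] k :=
    { toFun x := LinearMap.trace k L (LieAlgebra.ad k L x)
      map_add' x y := by rw [map_add, map_add]
      map_smul' c x := by rw [map_smul, map_smul, RingHom.id_apply] }
  have ad_lie (x y : L) : LieAlgebra.ad k L ⁅x, y⁆ =
      LieAlgebra.ad k L x * LieAlgebra.ad k L y - LieAlgebra.ad k L y * LieAlgebra.ad k L x :=
    LinearMap.ext fun z => lie_lie x y z
  have traceAd_lie (x y : L) : traceAd ⁅x, y⁆ = 0 := by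
    change LinearMap.trace k L (LieAlgebra.ad k L ⁅x, y⁆) = 0
    rw [ad_lie, map_sub, LinearMap.trace_mul_comm, sub_self]
  exact DFunLike.congr_fun (eq_zero_of_forall_lie_eq_zero hL traceAd_lie) x

variable [LieRingModule L k] [LieModule k L k] [LieModule.IsTrivial L k]

lemma subsingleton_ceH_one (hL : ⁅(⊤ : LieIdeal k L), (⊤ : LieIdeal k L)⁆ = ⊤) :
    Subsingleton (ceH k L k 1) := by
  have ceZ_eq_bot : ceZ k L k 1 = ⊥ := by
    refine (Submodule.eq_bot_iff _).mpr fun φ hφ => ?_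
    obtain ⟨f, rfl⟩ := (AlternatingMap.ofSubsingleton k L k (0 : Fin 1)).surjective φ
    rw [ceZ_eq_ker, LinearMap.mem_ker] at hφ
    have f_lie (x y : L) : f ⁅x, y⁆ = 0 :=
      neg_eq_zero.mp ((ceDiff_one_apply _ x y).symm.trans (DFunLike.congr_fun hφ ![x, y]))
    rw [eq_zero_of_forall_lie_eq_zero hL f_lie]
    rfl
  have : Subsingleton (ceZ k L k 1) := by rw [ceZ_eq_bot]; infer_instance
  infer_instance

end Perfect

section RootVectors

lemma eq_or_eq_add_one_or_eq_add_two (i j : Fin 3) : j = i ∨ j = i + 1 ∨ j = i + 2 := by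
  decide +revert

lemma add_one_add_one (i : Fin 3) : i + 1 + 1 = i + 2 := by decide +revert

lemma add_one_add_two (i : Fin 3) : i + 1 + 2 = i := by decide +revert

lemma add_two_add_one (i : Fin 3) : i + 2 + 1 = i := by decide +revert

lemma add_two_add_two (i : Fin 3) : i + 2 + 2 = i + 1 := by decide +revert

lemma lie_diagonal_single {n R : Type*} [Fintype n] [DecidableEq n] [CommRing R] (d : n → R)
    (i j : n) : ⁅Matrix.diagonal d, Matrix.single i j (1 : R)⁆ = Matrix.single i j (d i - d j) := by
  ext a b
  by_cases h : i = a ∧ j = b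
  · obtain ⟨rfl, rfl⟩ := h
    simp [Ring.lie_def]
  · simp [Ring.lie_def, Matrix.single_apply_of_ne _ _ _ _ _ h]

variable (k : Type*) [Field k]

/-- The root vector `E_{i,i+1}` of `sl₃`, with indices modulo 3. -/
def rootUp (i : Fin 3) : sl3 k := single i (i + 1) (by simp) 1

/-- The root vector `E_{i+1,i}` of `sl₃`, with indices modulo 3. -/
def rootDown (i : Fin 3) : sl3 k := single (i + 1) i (by simp) 1

/-- The coroot `E_{i,i} - E_{i+1,i+1}` of `sl₃`, with indices modulo 3. -/
def coroot (i : Fin 3) : sl3 k := singleSubSingle i (i + 1) 1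

lemma lie_rootUp_rootUp (i : Fin 3) : ⁅rootUp k i, rootUp k (i + 1)⁆ = rootDown k (i + 2) := by
  ext : 1
  have h : i + 2 ≠ i := by decide +revert
  simp [rootUp, rootDown, Ring.lie_def, h, add_one_add_one, add_two_add_one]

lemma lie_rootDown_rootDown (i : Fin 3) :
    ⁅rootDown k i, rootDown k (i + 1)⁆ = -rootUp k (i + 2) := by
  ext : 1
  have h : i ≠ i + 2 := by decide +revert
  simp [rootUp, rootDown, Ring.lie_def, h, add_one_add_one, add_two_add_one]

lemma lie_rootUp_rootDown_self (i : Fin 3) : ⁅rootUp k i, rootDown k i⁆ = coroot k i := by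
  ext : 1
  simp [rootUp, rootDown, coroot, Ring.lie_def]

lemma lie_rootUp_rootDown_of_ne {i j : Fin 3} (hij : i ≠ j) : ⁅rootUp k i, rootDown k j⁆ = 0 := by
  ext : 1
  simp [rootUp, rootDown, Ring.lie_def, hij, hij.symm]

lemma val_coroot (i : Fin 3) :
    (coroot k i).val = Matrix.diagonal (Pi.single i 1 - Pi.single (i + 1) 1) := by
  simp [coroot, ← Matrix.diagonal_single, Matrix.diagonal_sub]

variable [CharP k 3]

lemma coroot_weight (i j : Fin 3) :
    (Pi.single i 1 - Pi.single (i + 1) 1 : Fin 3 → k) j -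
      (Pi.single i 1 - Pi.single (i + 1) 1 : Fin 3 → k) (j + 1) = -1 := by
  have three_eq_zero : (3 : k) = 0 := CharP.cast_eq_zero k 3
  have h : i + 2 ≠ i := by decide +revert
  rcases eq_or_eq_add_one_or_eq_add_two i j with rfl | rfl | rfl
  · simpa using (by linear_combination three_eq_zero : (1 : k) + 1 = -1)
  · simp [h, add_one_add_one]
  · simp [h, add_two_add_one]

lemma lie_coroot_rootUp (i j : Fin 3) : ⁅coroot k i, rootUp k j⁆ = -rootUp k j := by
  ext : 1
  change ⁅(coroot k i).val, Matrix.single j (j + 1) 1⁆ = -Matrix.single j (j + 1) 1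
  rw [val_coroot, lie_diagonal_single, coroot_weight, Matrix.single_neg]

lemma lie_coroot_rootDown (i j : Fin 3) : ⁅coroot k i, rootDown k j⁆ = rootDown k j := by
  ext : 1
  change ⁅(coroot k i).val, Matrix.single (j + 1) j 1⁆ = Matrix.single (j + 1) j 1
  rw [val_coroot, lie_diagonal_single, ← neg_sub, coroot_weight, neg_neg]

end RootVectors

section Coordinates

variable {k : Type*} [Field k]

/-- The coordinate of a traceless matrix along the root vector `rootUp k i`. -/
def coordUp (i : Fin 3) : sl3 k →ₗ[k] k where
  toFun x := x.1 i (i + 1)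
  map_add' _ _ := rfl
  map_smul' _ _ := rfl

/-- The coordinate of a traceless matrix along the root vector `rootDown k i`. -/
def coordDown (i : Fin 3) : sl3 k →ₗ[k] k where
  toFun x := x.1 (i + 1) i
  map_add' _ _ := rfl
  map_smul' _ _ := rfl

/-- The `i`-th diagonal entry of a traceless matrix. -/
def coordDiag (i : Fin 3) : sl3 k →ₗ[k] k where
  toFun x := x.1 i i
  map_add' _ _ := rfl
  map_smul' _ _ := rfl

lemma coordUp_apply (i : Fin 3) (x : sl3 k) : coordUp i x = x.1 i (i + 1) := rfl

lemma coordDown_apply (i : Fin 3) (x : sl3 k) : coordDown i x = x.1 (i + 1) i := rfl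

lemma coordDiag_apply (i : Fin 3) (x : sl3 k) : coordDiag i x = x.1 i i := rfl

lemma coordUp_rootUp (i j : Fin 3) : coordUp i (rootUp k j) = if i = j then 1 else 0 := by
  simp [coordUp_apply, rootUp, Matrix.single_apply, eq_comm]

lemma coordDown_rootDown (i j : Fin 3) : coordDown i (rootDown k j) = if i = j then 1 else 0 := by
  simp [coordDown_apply, rootDown, Matrix.single_apply, eq_comm]

lemma coordUp_rootDown (i j : Fin 3) : coordUp i (rootDown k j) = 0 := by
  have h : ¬(j + 1 = i ∧ j = i + 1) := by decide +revert
  simp [coordUp_apply, rootDown, h]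

lemma coordDown_rootUp (i j : Fin 3) : coordDown i (rootUp k j) = 0 := by
  have h : ¬(j = i + 1 ∧ j + 1 = i) := by decide +revert
  simp [coordDown_apply, rootUp, h]

lemma coordDiag_rootUp (i j : Fin 3) : coordDiag i (rootUp k j) = 0 := by
  have h : ¬(j = i ∧ j + 1 = i) := by decide +revert
  simp [coordDiag_apply, rootUp, h]

lemma coordDiag_rootDown (i j : Fin 3) : coordDiag i (rootDown k j) = 0 := by
  have h : ¬(j + 1 = i ∧ j = i) := by decide +revert
  simp [coordDiag_apply, rootDown, h]

lemma coordUp_coroot (i j : Fin 3) : coordUp i (coroot k j) = 0 := by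
  simp [coordUp_apply, val_coroot]

lemma coordDown_coroot (i j : Fin 3) : coordDown i (coroot k j) = 0 := by
  simp [coordDown_apply, val_coroot]

lemma coordDiag_coroot (i j : Fin 3) :
    coordDiag i (coroot k j) = (Pi.single j 1 - Pi.single (j + 1) 1 : Fin 3 → k) i := by
  rw [coordDiag_apply, val_coroot, Matrix.diagonal_apply_eq]

lemma sum_coordDiag (x : sl3 k) : coordDiag 0 x + coordDiag 1 x + coordDiag 2 x = 0 := by
  rw [coordDiag_apply, coordDiag_apply, coordDiag_apply, ← Matrix.trace_fin_three]
  exact x.2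

lemma eq_sum_root_vectors (x : sl3 k) :
    x = ∑ i, coordUp i x • rootUp k i + ∑ i, coordDown i x • rootDown k i +
      (coordDiag 0 x • coroot k 0 - coordDiag 2 x • coroot k 1) := by
  have middle_entry : x.1 1 1 = -x.1 0 0 - x.1 2 2 := by
    have trace_eq_zero : x.1 0 0 + x.1 1 1 + x.1 2 2 = 0 := sum_coordDiag x
    linear_combination trace_eq_zero
  ext a b
  fin_cases a <;> fin_cases b <;>
    simp [coordUp_apply, coordDown_apply, coordDiag_apply, rootUp, rootDown, coroot,
      Fin.sum_univ_three, middle_entry]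

lemma span_root_vectors :
    Submodule.span k (Set.range (Sum.elim (rootUp k) (Sum.elim (rootDown k) (coroot k)))) = ⊤ := by
  refine Submodule.eq_top_iff'.mpr fun x => ?_
  rw [eq_sum_root_vectors x]
  have coroot_mem (i) : coroot k i ∈ Submodule.span k (Set.range
      (Sum.elim (rootUp k) (Sum.elim (rootDown k) (coroot k)))) :=
    Submodule.subset_span ⟨.inr (.inr i), rfl⟩
  refine add_mem (add_mem ?_ ?_) (sub_mem ?_ ?_)
  · exact sum_mem fun i _ => Submodule.smul_mem _ _ (Submodule.subset_span ⟨.inl i, rfl⟩)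
  · exact sum_mem fun i _ => Submodule.smul_mem _ _ (Submodule.subset_span ⟨.inr (.inl i), rfl⟩)
  · exact Submodule.smul_mem _ _ (coroot_mem 0)
  · exact Submodule.smul_mem _ _ (coroot_mem 1)

lemma finrank_sl3 : Module.finrank k (sl3 k) = 8 := by
  have trace_surjective : LinearMap.range (Matrix.traceLinearMap (Fin 3) k k) = ⊤ :=
    LinearMap.range_eq_top.mpr fun c => ⟨Matrix.single 0 0 c, by simp⟩
  have rank_nullity := (Matrix.traceLinearMap (Fin 3) k k).finrank_range_add_finrank_ker
  rw [trace_surjective, finrank_top, Module.finrank_self, Module.finrank_matrix,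
    Module.finrank_self, Fintype.card_fin] at rank_nullity
  change Module.finrank k (LinearMap.ker (Matrix.traceLinearMap (Fin 3) k k)) = 8
  omega

lemma perfect_sl3 : ⁅(⊤ : LieIdeal k (sl3 k)), (⊤ : LieIdeal k (sl3 k))⁆ = ⊤ := by
  rw [← LieSubmodule.toSubmodule_inj, LieSubmodule.top_toSubmodule, ← top_le_iff,
    ← span_root_vectors, Submodule.span_le]
  have lie_mem (x y : sl3 k) : ⁅x, y⁆ ∈ ⁅(⊤ : LieIdeal k (sl3 k)), (⊤ : LieIdeal k (sl3 k))⁆ :=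
    LieSubmodule.lie_mem_lie (LieSubmodule.mem_top x) (LieSubmodule.mem_top y)
  rintro _ ⟨i | i | i, rfl⟩
  · have rootUp_eq : rootUp k i = -⁅rootDown k (i + 1), rootDown k (i + 1 + 1)⁆ := by
      rw [lie_rootDown_rootDown, neg_neg, add_one_add_two]
    change rootUp k i ∈ _
    exact rootUp_eq ▸ neg_mem (lie_mem _ _)
  · have rootDown_eq : rootDown k i = ⁅rootUp k (i + 1), rootUp k (i + 1 + 1)⁆ := by
      rw [lie_rootUp_rootUp, add_one_add_two]
    change rootDown k i ∈ _
    exact rootDown_eq ▸ lie_mem _ _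
  · change coroot k i ∈ _
    exact lie_rootUp_rootDown_self k i ▸ lie_mem _ _

lemma sum_univ_three_cyclic {A : Type*} [AddCommMonoid A] (f : Fin 3 → A) (i : Fin 3) :
    ∑ l, f l = f i + f (i + 1) + f (i + 2) := by
  rw [← Equiv.sum_comp (Equiv.addLeft i) f, Fin.sum_univ_three]
  simp

variable [CharP k 3]

/-- The common value in characteristic 3 of the roots `x₀₀ - x₁₁`, `x₁₁ - x₂₂` and
`x₂₂ - x₀₀`, evaluated on a traceless matrix. -/
def cyclicRoot (x : sl3 k) : k := coordDiag 0 x - coordDiag 1 x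

lemma coordDiag_sub_coordDiag_succ (i : Fin 3) (x : sl3 k) :
    coordDiag i x - coordDiag (i + 1) x = cyclicRoot x := by
  have three_eq_zero : (3 : k) = 0 := CharP.cast_eq_zero k 3
  have trace_eq_zero := sum_coordDiag x
  fin_cases i
  · rfl
  · change coordDiag 1 x - coordDiag 2 x = coordDiag 0 x - coordDiag 1 x
    linear_combination coordDiag 1 x * three_eq_zero - trace_eq_zero
  · change coordDiag 2 x - coordDiag 0 x = coordDiag 0 x - coordDiag 1 x
    linear_combination trace_eq_zero - coordDiag 0 x * three_eq_zero

lemma coordUp_lie (i : Fin 3) (x y : sl3 k) :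
    coordUp i ⁅x, y⁆ = cyclicRoot x * coordUp i y - cyclicRoot y * coordUp i x +
      (coordDown (i + 2) x * coordDown (i + 1) y - coordDown (i + 1) x * coordDown (i + 2) y) := by
  simp only [coordUp_apply, coordDown_apply, coordDiag_apply, sl_bracket, Matrix.sub_apply,
    Matrix.mul_apply, sum_univ_three_cyclic _ i, add_one_add_one, add_two_add_one,
    ← coordDiag_sub_coordDiag_succ i]
  ring

lemma coordDown_lie (i : Fin 3) (x y : sl3 k) :
    coordDown i ⁅x, y⁆ = cyclicRoot y * coordDown i x - cyclicRoot x * coordDown i y +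
      (coordUp (i + 1) x * coordUp (i + 2) y - coordUp (i + 2) x * coordUp (i + 1) y) := by
  simp only [coordUp_apply, coordDown_apply, coordDiag_apply, sl_bracket, Matrix.sub_apply,
    Matrix.mul_apply, sum_univ_three_cyclic _ i, add_one_add_one, add_two_add_one,
    ← coordDiag_sub_coordDiag_succ i]
  ring

end Coordinates

section TwoForms

variable {R V : Type*} [CommRing R] [AddCommGroup V] [Module R V]

/-- The bilinear form `(x, y) ↦ f (x, y)` of a 2-form `f`. -/
def bilinForm (f : V [⋀^Fin 2]→ₗ[R] R) : LinearMap.BilinForm R V :=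
  LinearMap.mk₂ R (fun x y => f ![x, y])
    (fun x x' y => f.map_vecCons_add ![y] x x')
    (fun c x y => f.map_vecCons_smul ![y] c x)
    (fun x y y' => (f.curryLeft x).map_vecCons_add ![] y y')
    (fun c x y => (f.curryLeft x).map_vecCons_smul ![] c y)

lemma bilinForm_apply (f : V [⋀^Fin 2]→ₗ[R] R) (x y : V) : bilinForm f x y = f ![x, y] := rfl

lemma bilinForm_isAlt (f : V [⋀^Fin 2]→ₗ[R] R) : (bilinForm f).IsAlt := fun x =>
  f.map_eq_zero_of_eq ![x, x] (i := 0) (j := 1) rfl Fin.zero_ne_one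

lemma eq_zero_of_bilinForm_eq_zero {f : V [⋀^Fin 2]→ₗ[R] R} (hf : bilinForm f = 0) : f = 0 := by
  ext v
  rw [← FinVec.etaExpand_eq v]
  exact LinearMap.congr_fun₂ hf (v 0) (v 1)

/-- The wedge product of two linear functionals. -/
def wedge (α β : V →ₗ[R] R) : V [⋀^Fin 2]→ₗ[R] R :=
  Matrix.detRowAlternating.compLinearMap (LinearMap.pi ![α, β])

lemma wedge_apply (α β : V →ₗ[R] R) (x y : V) : wedge α β ![x, y] = α x * β y - β x * α y :=
  Matrix.det_fin_two _

end TwoForms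

section TwoCocycles

variable {k L : Type*} [Field k] [LieRing L] [LieAlgebra k L] [LieRingModule L k]
  [LieModule k L k] [LieModule.IsTrivial L k]

lemma bilinForm_lie_right {f : L [⋀^Fin 2]→ₗ[k] k} (hf : f ∈ ceZ k L k 2) (x y z : L) :
    bilinForm f x ⁅y, z⁆ = bilinForm f ⁅x, y⁆ z + bilinForm f y ⁅x, z⁆ := by
  rw [ceZ_eq_ker, LinearMap.mem_ker] at hf
  have cocycle := ceDiff_two_apply f x y z
  rw [hf, AlternatingMap.zero_apply, sub_sub] at cocycle
  exact sub_eq_zero.mp cocycle.symm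

end TwoCocycles

section SecondCohomology

variable {k : Type*} [Field k]

instance : LieModule.IsTrivial (sl3 k) k := ⟨fun _ _ => rfl⟩

variable (k) in
/-- The values of a 2-cocycle of `sl₃` on the pairs `(rootUp i, rootDown j)` with `i ≠ j`. These
pairs commute, so the values depend only on the cohomology class. -/
def mixedValues : ceZ k (sl3 k) k 2 →ₗ[k] ({p : Fin 3 × Fin 3 // p.1 ≠ p.2} → k) :=
  LinearMap.pi fun p => evalAt ![rootUp k p.1.1, rootDown k p.1.2] ∘ₗ (ceZ k (sl3 k) k 2).subtype

lemma mixedValues_apply (f : ceZ k (sl3 k) k 2) (p : {p : Fin 3 × Fin 3 // p.1 ≠ p.2}) :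
    mixedValues k f p = bilinForm f.1 (rootUp k p.1.1) (rootDown k p.1.2) := rfl

lemma exists_functional_eq (a b : Fin 3 → k) (c₀ c₁ : k) :
    ∃ φ : sl3 k →ₗ[k] k, (∀ i, φ (rootUp k i) = a i) ∧ (∀ i, φ (rootDown k i) = b i) ∧
      φ (coroot k 0) = c₀ ∧ φ (coroot k 1) = c₁ := by
  refine ⟨∑ l, a l • coordUp l + ∑ l, b l • coordDown l + (c₀ • coordDiag 0 - c₁ • coordDiag 2),
    fun i => ?_, fun i => ?_, ?_, ?_⟩
  · simp [coordUp_rootUp, coordDown_rootUp, coordDiag_rootUp]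
  · simp [coordUp_rootDown, coordDown_rootDown, coordDiag_rootDown]
  · simp [coordUp_coroot, coordDown_coroot, coordDiag_coroot]
  · simp [coordUp_coroot, coordDown_coroot, coordDiag_coroot]

lemma bilinForm_eq_zero_of_root_vectors {B : LinearMap.BilinForm k (sl3 k)} (hB : B.IsAlt)
    (up_up : ∀ i j, B (rootUp k i) (rootUp k j) = 0)
    (down_down : ∀ i j, B (rootDown k i) (rootDown k j) = 0)
    (up_down : ∀ i j, B (rootUp k i) (rootDown k j) = 0)
    (coroot_up : ∀ i j, B (coroot k i) (rootUp k j) = 0)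
    (coroot_down : ∀ i j, B (coroot k i) (rootDown k j) = 0)
    (coroot_coroot : ∀ i j, B (coroot k i) (coroot k j) = 0) : B = 0 := by
  refine LinearMap.ext_on_range span_root_vectors fun a =>
    LinearMap.ext_on_range span_root_vectors fun b => ?_
  rcases a with i | i | i <;> rcases b with j | j | j
  · exact up_up i j
  · exact up_down i j
  · exact hB.isRefl _ _ (coroot_up j i)
  · exact hB.isRefl _ _ (up_down j i)
  · exact down_down i j
  · exact hB.isRefl _ _ (coroot_down j i)
  · exact coroot_up i j
  · exact coroot_down i j
  · exact coroot_coroot i j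

lemma forall_eq_zero_of_isAlt_of_succ {V : Type*} [AddCommGroup V] [Module k V]
    {B : LinearMap.BilinForm k V} (hB : B.IsAlt) {w : Fin 3 → V}
    (hw : ∀ i, B (w i) (w (i + 1)) = 0) (i j : Fin 3) : B (w i) (w j) = 0 := by
  rcases eq_or_eq_add_one_or_eq_add_two i j with rfl | rfl | rfl
  · exact hB _
  · exact hw i
  · exact hB.isRefl _ _ (by simpa only [add_two_add_one] using hw (i + 2))

lemma mixedValues_eq_zero_of_mem_ceB {f : ceZ k (sl3 k) k 2} (hf : f.1 ∈ ceB k (sl3 k) k 2) :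
    mixedValues k f = 0 := by
  rw [ceB_succ_eq_range] at hf
  obtain ⟨φ, hφ⟩ := hf
  ext p
  rw [mixedValues_apply, bilinForm_apply, ← hφ, ceDiff_one_apply,
    lie_rootUp_rootDown_of_ne k p.2, φ.map_coord_zero 0 rfl, neg_zero, Pi.zero_apply]

variable [CharP k 3]

lemma eq_zero_of_normalized {f : sl3 k [⋀^Fin 2]→ₗ[k] k} (hf : f ∈ ceZ k (sl3 k) k 2)
    (mixed : ∀ i j, i ≠ j → bilinForm f (rootUp k i) (rootDown k j) = 0)
    (up_succ : ∀ i, bilinForm f (rootUp k i) (rootUp k (i + 1)) = 0)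
    (down_succ : ∀ i, bilinForm f (rootDown k i) (rootDown k (i + 1)) = 0)
    (opposite_zero : bilinForm f (rootUp k 0) (rootDown k 0) = 0)
    (opposite_one : bilinForm f (rootUp k 1) (rootDown k 1) = 0) : f = 0 := by
  have cocycle := bilinForm_lie_right hf
  have isAlt := bilinForm_isAlt f
  have up_up := forall_eq_zero_of_isAlt_of_succ isAlt up_succ
  have down_down := forall_eq_zero_of_isAlt_of_succ isAlt down_succ
  have opposite_two : bilinForm f (rootUp k 2) (rootDown k 2) = 0 := by
    have sum_eq_zero := cocycle (rootUp k 0) (rootUp k 1) (rootUp k 2)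
    have lie₁₂ : ⁅rootUp k 1, rootUp k 2⁆ = rootDown k 0 := lie_rootUp_rootUp k 1
    have lie₀₁ : ⁅rootUp k 0, rootUp k 1⁆ = rootDown k 2 := lie_rootUp_rootUp k 0
    have lie₂₀ : ⁅rootUp k 2, rootUp k 0⁆ = rootDown k 1 := lie_rootUp_rootUp k 2
    rw [lie₁₂, lie₀₁, ← lie_skew, lie₂₀, map_neg, opposite_zero, opposite_one, neg_zero,
      add_zero] at sum_eq_zero
    exact isAlt.isRefl _ _ sum_eq_zero.symm
  have up_down (i j) : bilinForm f (rootUp k i) (rootDown k j) = 0 := by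
    by_cases hij : i = j
    · subst hij
      fin_cases i
      exacts [opposite_zero, opposite_one, opposite_two]
    · exact mixed i j hij
  apply eq_zero_of_bilinForm_eq_zero
  refine bilinForm_eq_zero_of_root_vectors isAlt up_up down_down up_down
    (fun i j => ?_) (fun i j => ?_) fun i j => ?_
  · have := cocycle (coroot k i) (rootDown k (j + 1)) (rootDown k (j + 1 + 1))
    simpa only [lie_rootDown_rootDown, lie_coroot_rootDown, add_one_add_two, map_neg, down_down,
      add_zero, neg_eq_zero] using this
  · have := cocycle (coroot k i) (rootUp k (j + 1)) (rootUp k (j + 1 + 1))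
    simpa only [lie_rootUp_rootUp, lie_coroot_rootUp, add_one_add_two, map_neg, LinearMap.neg_apply,
      up_up, neg_zero, add_zero] using this
  · have := cocycle (coroot k i) (rootUp k j) (rootDown k j)
    simpa only [lie_rootUp_rootDown_self, lie_coroot_rootUp, lie_coroot_rootDown, map_neg,
      LinearMap.neg_apply, up_down, neg_zero, add_zero] using this

lemma mem_ceB_of_mixedValues_eq_zero {f : ceZ k (sl3 k) k 2} (hf : mixedValues k f = 0) :
    f.1 ∈ ceB k (sl3 k) k 2 := by
  obtain ⟨φ, φ_up, φ_down, φ_coroot_zero, φ_coroot_one⟩ := exists_functional_eq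
    (fun i => -bilinForm f.1 (rootDown k (i + 1)) (rootDown k (i + 2)))
    (fun i => bilinForm f.1 (rootUp k (i + 1)) (rootUp k (i + 2)))
    (bilinForm f.1 (rootUp k 0) (rootDown k 0)) (bilinForm f.1 (rootUp k 1) (rootDown k 1))
  set θ := AlternatingMap.ofSubsingleton k (sl3 k) k (0 : Fin 1) φ
  have correction (x y : sl3 k) :
      bilinForm (f.1 + ceDiff θ) x y = bilinForm f.1 x y - φ ⁅x, y⁆ :=
    (congrArg (bilinForm f.1 x y + ·) (ceDiff_one_apply θ x y)).trans (sub_eq_add_neg _ _).symm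
  have normalized : f.1 + ceDiff θ = 0 := by
    refine eq_zero_of_normalized (add_mem f.2 ?_) (fun i j hij => ?_) (fun i => ?_) (fun i => ?_)
      ?_ ?_
    · rw [ceZ_eq_ker]
      exact ceDiff_ceDiff θ
    · rw [correction, lie_rootUp_rootDown_of_ne k hij, map_zero, sub_zero]
      exact congrFun hf ⟨(i, j), hij⟩
    · rw [correction, lie_rootUp_rootUp, φ_down, add_two_add_one, add_two_add_two, sub_self]
    · rw [correction, lie_rootDown_rootDown, map_neg, φ_up, add_two_add_one, add_two_add_two,
        neg_neg, sub_self]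
    · rw [correction, lie_rootUp_rootDown_self, φ_coroot_zero, sub_self]
    · rw [correction, lie_rootUp_rootDown_self, φ_coroot_one, sub_self]
  rw [ceB_succ_eq_range, eq_neg_of_add_eq_zero_left normalized]
  exact neg_mem (LinearMap.mem_range_self _ θ)

lemma ker_mixedValues :
    LinearMap.ker (mixedValues k) = (ceB k (sl3 k) k 2).comap (ceZ k (sl3 k) k 2).subtype :=
  le_antisymm (fun _ => mem_ceB_of_mixedValues_eq_zero) fun _ => mixedValues_eq_zero_of_mem_ceB

lemma wedge_mem_ceZ {i j : Fin 3} (hij : i ≠ j) :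
    wedge (coordUp i) (coordDown j) ∈ ceZ k (sl3 k) k 2 := by
  rw [ceZ_eq_ker, LinearMap.mem_ker]
  ext v
  rw [← FinVec.etaExpand_eq v]
  change ceDiff _ ![v 0, v 1, v 2] = 0
  simp only [ceDiff_two_apply, wedge_apply, coordUp_lie, coordDown_lie]
  rcases eq_or_eq_add_one_or_eq_add_two i j with rfl | rfl | rfl
  · exact absurd rfl hij
  · simp only [add_one_add_one, add_one_add_two]
    ring
  · simp only [add_two_add_one, add_two_add_two]
    ring

lemma mixedValues_surjective : Function.Surjective (mixedValues k) := fun c => by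
  refine ⟨∑ p, c p • ⟨wedge (coordUp p.1.1) (coordDown p.1.2), wedge_mem_ceZ p.2⟩, ?_⟩
  have mixedValues_wedge (p) : mixedValues k ⟨_, wedge_mem_ceZ p.2⟩ = Pi.single p 1 := by
    ext q
    rw [mixedValues_apply, bilinForm_apply, wedge_apply, coordUp_rootUp, coordDown_rootDown,
      coordDown_rootUp, zero_mul, sub_zero, Pi.single_apply,
      ite_zero_mul_ite_zero, mul_one]
    exact if_congr (by rw [← Prod.ext_iff, ← Subtype.ext_iff, eq_comm]) rfl rfl
  rw [map_sum]
  simp only [map_smul, mixedValues_wedge]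
  exact (pi_eq_sum_univ' c).symm

lemma finrank_ceH_two : Module.finrank k (ceH k (sl3 k) k 2) = 6 := by
  let e : ceH k (sl3 k) k 2 ≃ₗ[k] ({p : Fin 3 × Fin 3 // p.1 ≠ p.2} → k) :=
    (Submodule.quotEquivOfEq _ _ ker_mixedValues.symm).trans
      ((mixedValues k).quotKerEquivOfSurjective mixedValues_surjective)
  rw [e.finrank_eq, Module.finrank_fintype_fun_eq_card]
  decide

end SecondCohomology

end ChevalleyEilenberg

theorem H6_H7_trivial_coeffs_general (k : Type*) [Field k] [CharP k 3] :
    Module.finrank k (ceH k (sl3 k) k 6) = 6 ∧ Subsingleton (ceH k (sl3 k) k 7) := by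
  open ChevalleyEilenberg in
  have duality (p q : ℕ) (hpq : p + q = 8) :
      Module.finrank k (ceH k (sl3 k) k p) = Module.finrank k (ceH k (sl3 k) k q) :=
    poincare_duality (trace_ad_eq_zero_of_perfect perfect_sl3) (hpq.trans finrank_sl3.symm)
  have : Subsingleton (ceH k (sl3 k) k 1) := subsingleton_ceH_one perfect_sl3
  refine ⟨(duality 6 2 rfl).trans finrank_ceH_two, ?_⟩
  rw [← Module.finrank_zero_iff (R := k), duality 7 1 rfl, Module.finrank_zero_of_subsingleton]

theorem H6_H7_trivial_coeffs (k : Type*) [Field k] [IsAlgClosed k] [CharP k 3] :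
    Module.finrank k (ceH k (sl3 k) k 6) = 6 ∧ Subsingleton (ceH k (sl3 k) k 7) :=
  H6_H7_trivial_coeffs_general k
end

section
/- Let k be an algebraically closed field of characteristic 3, let g = sl_3(k) be the Lie algebra of traceless 3×3 matrices over k, let Z(g) be its center, and let L = g/Z(g) be the 7-dimensional quotient g-module with the action induced by the adjoint action. Then dim_k H^1(g, L) = 7. -/
/-- The quotient `sl₃(k)/Z(sl₃(k))` of `sl₃(k)` by its center, as a module over `sl₃(k)`
via the action induced by the adjoint action. -/
abbrev sl3ModCenter (k : Type*) [Field k] := (sl3 k) ⧸ LieAlgebra.center k (sl3 k)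

/-!
`H¹(g, M)` is the space of derivations `g → M` modulo inner ones. In characteristic `3` the quotient
`L = sl₃/Z(sl₃)` is the Lie algebra of trace-zero split octonions. For `h = diag(1, -1, 0)` it
splits as `k ⊕ V ⊕ W`, where the three-dimensional summands are the weight spaces for `-1` and `1`,
the bracket on each of them being a cross product with values in the other. Let `A` be the matrix of
the `V → V` part of a derivation `D`. Since the lift of `V` generates `sl₃`, the identity
`A u × v + u × A v = (tr A - Aᵀ)(u × v)` determines the `W → W` part, and comparing `D` on
`h = [e, f]` and on `[h, e] = -e`, with `e`, `f` of weights `-1`, `1`, forces `tr A = 0`. Every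
traceless `A` occurs, and `D` is inner exactly when `A` is scalar: subtracting a suitable inner
derivation then leaves one that kills both `h` and `V`. Hence `H¹(sl₃, L)` is the space of traceless
matrices modulo scalar ones, which is `L` itself.
-/

section FirstCohomology

variable {k g M : Type*} [Field k] [LieRing g] [LieAlgebra k g]
variable [AddCommGroup M] [Module k M] [LieRingModule g M]

lemma ceD_ofSubsingleton (f : g →ₗ[k] M) (v : Fin 2 → g) :
    ceD k g M (AlternatingMap.ofSubsingleton k g M 0 f) v =
      ⁅v 0, f (v 1)⁆ - ⁅v 1, f (v 0)⁆ - f ⁅v 0, v 1⁆ := by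
  simp [ceD, Fin.sum_univ_two]
  abel

variable [LieModule k g M]

variable (k g M) in
/-- Lie derivations `g → M` are the same as Chevalley–Eilenberg `1`-cocycles, a linear map being
regarded as an alternating map in one variable. -/
def lieDerivationEquivCeZOne : LieDerivation k g M ≃ₗ[k] ceZ k g M 1 where
  toFun D := ⟨AlternatingMap.ofSubsingleton k g M 0 D, fun v ↦ by simp [ceD_ofSubsingleton]⟩
  invFun ψ :=
    { toLinearMap := (AlternatingMap.ofSubsingleton k g M (0 : Fin 1)).symm ψ.1
      leibniz' := fun x y ↦ by
        have h := ψ.2 ![x, y]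
        rw [← (AlternatingMap.ofSubsingleton k g M 0).apply_symm_apply ψ.1,
          ceD_ofSubsingleton] at h
        exact (sub_eq_zero.1 h).symm }
  map_add' _ _ := rfl
  map_smul' _ _ := rfl
  left_inv _ := rfl
  right_inv ψ := Subtype.ext ((AlternatingMap.ofSubsingleton k g M 0).apply_symm_apply ψ.1)

lemma map_range_inner_eq_ceB_one :
    (LinearMap.range (LieDerivation.inner k g M)).map
        (lieDerivationEquivCeZOne k g M : LieDerivation k g M →ₗ[k] ceZ k g M 1) =
      (ceB k g M 1).comap (ceZ k g M 1).subtype := by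
  ext ψ
  constructor
  · rintro ⟨_, ⟨m, rfl⟩, rfl⟩
    exact ⟨AlternatingMap.constOfIsEmpty k g (Fin 0) m, fun _ ↦ rfl⟩
  · rintro ⟨φ, hφ⟩
    exact ⟨_, ⟨φ ![], rfl⟩, Subtype.ext (AlternatingMap.ext fun v ↦ (hφ v).symm)⟩

variable (k g M) in
/-- `H¹(g, M)` as the space of outer derivations `g → M`. -/
def outerDerivationEquivCeHOne :
    (LieDerivation k g M ⧸ LinearMap.range (LieDerivation.inner k g M)) ≃ₗ[k] ceH k g M 1 :=
  Submodule.Quotient.equiv _ _ (lieDerivationEquivCeZOne k g M) map_range_inner_eq_ceB_one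

end FirstCohomology

section CrossProduct

open Matrix

variable {R : Type*} [CommRing R]

lemma mulVec_cross_add_cross_mulVec (A : Matrix (Fin 3) (Fin 3) R) (u v : Fin 3 → R) :
    (A *ᵥ u) ⨯₃ v + u ⨯₃ (A *ᵥ v) = A.trace • (u ⨯₃ v) - Aᵀ *ᵥ (u ⨯₃ v) := by
  ext i
  fin_cases i <;>
    simp [cross_apply, mulVec, dotProduct, Fin.sum_univ_three, trace_fin_three] <;> ring

lemma linearMap_ext_cross {N : Type*} [AddCommGroup N] [Module R N]
    {f g : (Fin 3 → R) →ₗ[R] N} (h : ∀ u v, f (u ⨯₃ v) = g (u ⨯₃ v)) : f = g := by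
  refine (Pi.basisFun R (Fin 3)).ext fun i ↦ ?_
  have hi : Pi.basisFun R (Fin 3) i = Pi.single (i + 1) 1 ⨯₃ Pi.single (i + 2) 1 := by
    ext j
    fin_cases i <;> fin_cases j <;> simp [cross_apply]
  rw [hi, h]

end CrossProduct

section ZornBracket

open Matrix

variable {R : Type*} [CommRing R]

variable (R) in
/-- Trace-zero Zorn vector matrices: `(t, v, w)` stands for the split octonion with diagonal
entries `t`, `-t` and off-diagonal vectors `v` (upper) and `w` (lower). -/
abbrev ZornVec := R × (Fin 3 → R) × (Fin 3 → R)

/-- The commutator of trace-zero split octonions in characteristic `3`, where the factors `2` in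
the octonion commutator become `-1`. -/
def zornBracket (x y : ZornVec R) : ZornVec R :=
  (x.2.1 ⬝ᵥ y.2.2 - x.2.2 ⬝ᵥ y.2.1,
    y.1 • x.2.1 - x.1 • y.2.1 - x.2.2 ⨯₃ y.2.2,
    x.1 • y.2.2 - y.1 • x.2.2 + x.2.1 ⨯₃ y.2.1)

lemma eq_zero_of_forall_zornBracket_eq_zero {x : ZornVec R}
    (h : ∀ y, zornBracket y x = 0) : x = 0 := by
  obtain ⟨hv, hw⟩ : x.2.1 = 0 ∧ x.2.2 = 0 := by simpa [zornBracket] using h (1, 0, 0)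
  have ht : x.1 = 0 := by
    simpa [zornBracket] using congr_fun (congr_arg (fun z ↦ z.2.1) (h (0, 1, 0))) 0
  exact Prod.ext ht (Prod.ext hv hw)

lemma zornBracket_zero (x : ZornVec R) : zornBracket x 0 = 0 := by
  simp [zornBracket]

lemma eq_of_zornBracket_one_eq_neg [CharP R 3] {x : ZornVec R}
    (h : zornBracket (1, 0, 0) x = -x) : x = (0, x.2.1, 0) := by
  have three : (3 : R) = 0 := CharP.ofNat_eq_zero R 3
  obtain ⟨t, v, w⟩ := x
  obtain ⟨rfl, hw⟩ : t = 0 ∧ w = -w := by simpa [zornBracket] using h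
  have hw_zero : w = 0 := funext fun i ↦ by
    have hi : w i = -w i := congr_fun hw i
    rw [Pi.zero_apply]
    linear_combination w i * three - hi
  rw [hw_zero]

/-- The endomorphism `(t, v, w) ↦ (0, A v, -Aᵀ w)`, a derivation of `zornBracket` when
`tr A = 0`. -/
def zornDiagonal (A : Matrix (Fin 3) (Fin 3) R) : Module.End R (ZornVec R) :=
  LinearMap.prodMap 0 (LinearMap.prodMap A.mulVecLin (-Aᵀ.mulVecLin))

lemma zornDiagonal_zornBracket {A : Matrix (Fin 3) (Fin 3) R} (hA : A.trace = 0)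
    (x y : ZornVec R) :
    zornDiagonal A (zornBracket x y) =
      zornBracket x (zornDiagonal A y) - zornBracket y (zornDiagonal A x) := by
  obtain ⟨t, v, w⟩ := x
  obtain ⟨t', v', w'⟩ := y
  have hadj (a b : Fin 3 → R) : a ⬝ᵥ Aᵀ *ᵥ b = b ⬝ᵥ A *ᵥ a := by
    rw [dotProduct_mulVec, vecMul_transpose, dotProduct_comm]
  have hcross (a b : Fin 3 → R) : A *ᵥ (a ⨯₃ b) = (Aᵀ *ᵥ b) ⨯₃ a - (Aᵀ *ᵥ a) ⨯₃ b := by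
    have h := mulVec_cross_add_cross_mulVec Aᵀ a b
    rw [trace_transpose, hA, zero_smul, zero_sub, transpose_transpose,
      ← cross_anticomm _ a] at h
    linear_combination h
  have hcross_transpose (a b : Fin 3 → R) : Aᵀ *ᵥ (a ⨯₃ b) = b ⨯₃ (A *ᵥ a) - a ⨯₃ (A *ᵥ b) := by
    have h := mulVec_cross_add_cross_mulVec A a b
    rw [hA, zero_smul, zero_sub, ← cross_anticomm b] at h
    linear_combination h
  refine Prod.ext ?_ (Prod.ext ?_ ?_)
  · simp [zornDiagonal, zornBracket, hadj, -mulVecLin_transpose]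
    ring
  · simp [zornDiagonal, zornBracket, mulVec_sub, mulVec_smul, hcross, -mulVecLin_transpose]
    abel
  · simp [zornDiagonal, zornBracket, mulVec_sub, mulVec_add, mulVec_smul,
      hcross_transpose, -mulVecLin_transpose]
    abel

end ZornBracket

namespace sl3

open Matrix

variable {k : Type*} [Field k]

lemma diag_sum_eq_zero (X : sl3 k) : X.1 0 0 + X.1 1 1 + X.1 2 2 = 0 :=
  (trace_fin_three X.1).symm.trans X.2

lemma lie_entry (X Y : sl3 k) (i j : Fin 3) :
    (⁅X, Y⁆ : sl3 k).1 i j =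
      (X.1 i 0 * Y.1 0 j + X.1 i 1 * Y.1 1 j + X.1 i 2 * Y.1 2 j) -
        (Y.1 i 0 * X.1 0 j + Y.1 i 1 * X.1 1 j + Y.1 i 2 * X.1 2 j) := by
  simp only [LieAlgebra.SpecialLinear.sl_bracket, Matrix.sub_apply, mul_apply, Fin.sum_univ_three]

/-- Coordinates of `X` modulo scalar matrices in characteristic `3`. The upper vector collects the
entries in the `-1` weight space of `diag(1, -1, 0)`, namely the root spaces of `E₀₁`, `E₁₂`, `E₂₀`,
and the lower vector those in the `+1` weight space. -/
def coord : sl3 k →ₗ[k] ZornVec k where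
  toFun X := (X.1 0 0 - X.1 2 2, ![X.1 0 1, X.1 1 2, X.1 2 0], ![X.1 1 0, X.1 2 1, X.1 0 2])
  map_add' X Y := by
    ext i <;> (try fin_cases i) <;> simp; ring
  map_smul' c X := by
    ext i <;> (try fin_cases i) <;> simp [mul_sub]

variable (k) in
/-- The element `diag(1, -1, 0)` of `sl₃`, which acts with weights `0`, `-1`, `1` in
characteristic `3`. -/
def cartan : sl3 k :=
  ⟨!![1, 0, 0; 0, -1, 0; 0, 0, 0], (trace_fin_three_of ..).trans (by simp)⟩

/-- The inclusion of the `-1` weight space of `cartan` in characteristic `3`, spanned by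
`E₀₁`, `E₁₂`, `E₂₀`. -/
def negVec : (Fin 3 → k) →ₗ[k] sl3 k where
  toFun v := ⟨!![0, v 0, 0; 0, 0, v 1; v 2, 0, 0], (trace_fin_three_of ..).trans (by simp)⟩
  map_add' u v := by ext i j; fin_cases i <;> fin_cases j <;> simp
  map_smul' c v := by ext i j; fin_cases i <;> fin_cases j <;> simp

/-- The inclusion of the `+1` weight space of `cartan` in characteristic `3`, spanned by
`E₁₀`, `E₂₁`, `E₀₂`. -/
def posVec : (Fin 3 → k) →ₗ[k] sl3 k where
  toFun v := ⟨!![0, 0, v 2; v 0, 0, 0; 0, v 1, 0], (trace_fin_three_of ..).trans (by simp)⟩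
  map_add' u v := by ext i j; fin_cases i <;> fin_cases j <;> simp
  map_smul' c v := by ext i j; fin_cases i <;> fin_cases j <;> simp

lemma coord_cartan : coord (cartan k) = (1, 0, 0) := by
  ext i <;> (try fin_cases i) <;> simp [coord, cartan]

lemma coord_negVec (v : Fin 3 → k) : coord (negVec v) = (0, v, 0) := by
  ext i <;> (try fin_cases i) <;> simp [coord, negVec]

lemma coord_posVec (v : Fin 3 → k) : coord (posVec v) = (0, 0, v) := by
  ext i <;> (try fin_cases i) <;> simp [coord, posVec]

lemma coord_surjective : Function.Surjective (coord (k := k)) := fun x ↦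
  ⟨x.1 • cartan k + negVec x.2.1 + posVec x.2.2, by
    simp [coord_cartan, coord_negVec, coord_posVec]⟩

lemma lie_negVec_negVec (u v : Fin 3 → k) : ⁅negVec u, negVec v⁆ = posVec (u ⨯₃ v) := by
  ext i j
  rw [lie_entry]
  fin_cases i <;> fin_cases j <;> simp [negVec, posVec, cross_apply, mul_comm]

lemma lie_negVec_posVec_single :
    ⁅negVec (Pi.single 0 1 : Fin 3 → k), posVec (Pi.single 0 1)⁆ = cartan k := by
  ext i j
  rw [lie_entry]
  fin_cases i <;> fin_cases j <;> simp [negVec, posVec, cartan]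

lemma eq_negVec_add_posVec_add_lie (X : sl3 k) :
    X = negVec (coord X).2.1 + posVec (coord X).2.2 +
      X.1 0 0 • ⁅negVec (Pi.single 0 1 : Fin 3 → k), posVec (Pi.single 0 1)⁆ -
      X.1 2 2 • ⁅negVec (Pi.single 1 1 : Fin 3 → k), posVec (Pi.single 1 1)⁆ := by
  ext i j
  fin_cases i <;> fin_cases j <;> simp [coord, negVec, posVec, Ring.lie_def]
  linear_combination diag_sum_eq_zero X

lemma lieSpan_range_negVec :
    LieSubalgebra.lieSpan k (sl3 k) (Set.range negVec) = ⊤ := by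
  set S := LieSubalgebra.lieSpan k (sl3 k) (Set.range negVec)
  have hneg (v : Fin 3 → k) : negVec v ∈ S := LieSubalgebra.subset_lieSpan ⟨v, rfl⟩
  have hpos : S.toSubmodule.mkQ ∘ₗ posVec = 0 := linearMap_ext_cross fun u v ↦ by
    rw [LinearMap.comp_apply, ← lie_negVec_negVec]
    exact (Submodule.Quotient.mk_eq_zero _).2 (S.lie_mem (hneg u) (hneg v))
  replace hpos (w : Fin 3 → k) : posVec w ∈ S :=
    (Submodule.Quotient.mk_eq_zero _).1 (LinearMap.congr_fun hpos w)
  refine eq_top_iff.2 fun X _ ↦ ?_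
  rw [eq_negVec_add_posVec_add_lie X]
  exact sub_mem (add_mem (add_mem (hneg _) (hpos _)) (S.smul_mem _ (S.lie_mem (hneg _) (hpos _))))
    (S.smul_mem _ (S.lie_mem (hneg _) (hpos _)))

variable [CharP k 3]

lemma lie_cartan_negVec (v : Fin 3 → k) : ⁅cartan k, negVec v⁆ = -negVec v := by
  have three : (3 : k) = 0 := CharP.ofNat_eq_zero k 3
  ext i j
  rw [lie_entry]
  fin_cases i <;> fin_cases j <;> simp [negVec, cartan]
  linear_combination v 0 * three

lemma coord_lie (X Y : sl3 k) : coord ⁅X, Y⁆ = zornBracket (coord X) (coord Y) := by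
  have hX := diag_sum_eq_zero X
  have hY := diag_sum_eq_zero Y
  ext i <;> (try fin_cases i) <;>
    simp [coord, zornBracket, lie_entry, cross_apply, dotProduct, Fin.sum_univ_three,
      -LieSubalgebra.coe_bracket] <;> grind

lemma coord_eq_zero_iff {X : sl3 k} : coord X = 0 ↔ ∃ c : k, X.1 = c • 1 := by
  have hX := diag_sum_eq_zero X
  constructor
  · intro h
    simp only [coord, LinearMap.coe_mk, AddHom.coe_mk, Prod.mk_eq_zero, cons_eq_zero_iff,
      sub_eq_zero] at h
    refine ⟨X.1 0 0, ?_⟩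
    ext i j
    fin_cases i <;> fin_cases j <;> simp <;> grind
  · rintro ⟨c, hc⟩
    ext i <;> (try fin_cases i) <;> simp [coord, hc]

lemma ker_coord :
    LinearMap.ker (coord (k := k)) = (LieAlgebra.center k (sl3 k)).toSubmodule := by
  ext X
  rw [LinearMap.mem_ker, LieSubmodule.mem_toSubmodule, LieModule.mem_maxTrivSubmodule]
  constructor
  · rw [coord_eq_zero_iff]
    rintro ⟨c, hc⟩ Y
    apply Subtype.ext
    rw [LieAlgebra.SpecialLinear.sl_bracket, hc]
    simp
  · refine fun h ↦ eq_zero_of_forall_zornBracket_eq_zero fun y ↦ ?_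
    obtain ⟨Y, rfl⟩ := coord_surjective y
    rw [← coord_lie, h, map_zero]

lemma mem_center_iff {X : sl3 k} :
    X ∈ LieAlgebra.center k (sl3 k) ↔ ∃ c : k, X.1 = c • 1 := by
  rw [← coord_eq_zero_iff, ← LinearMap.mem_ker, ker_coord, LieSubmodule.mem_toSubmodule]

/-- The coordinates on `sl₃/Z(sl₃)` induced by `coord`. -/
noncomputable def quotCoord : sl3ModCenter k ≃ₗ[k] ZornVec k :=
  LinearEquiv.ofBijective ((LieAlgebra.center k (sl3 k)).toSubmodule.liftQ coord ker_coord.ge)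
    ⟨LinearMap.ker_eq_bot.1 (Submodule.ker_liftQ_eq_bot _ _ _ ker_coord.le), fun x ↦
      (coord_surjective x).imp' (LieSubmodule.Quotient.mk' (LieAlgebra.center k (sl3 k)))
        fun _ hX ↦ hX⟩

lemma quotCoord_mk (X : sl3 k) :
    quotCoord (LieSubmodule.Quotient.mk' (LieAlgebra.center k (sl3 k)) X) = coord X :=
  rfl

lemma quotCoord_lie (X : sl3 k) (m : sl3ModCenter k) :
    quotCoord ⁅X, m⁆ = zornBracket (coord X) (quotCoord m) := by
  obtain ⟨Y, rfl⟩ := LieSubmodule.Quotient.surjective_mk' _ m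
  exact (quotCoord_mk ⁅X, Y⁆).trans (coord_lie X Y)

lemma finrank_sl3ModCenter : Module.finrank k (sl3ModCenter k) = 7 := by
  simp [quotCoord.finrank_eq]

section Derivation

variable (D : LieDerivation k (sl3 k) (sl3ModCenter k))

lemma quotCoord_derivation_lie (X Y : sl3 k) :
    quotCoord (D ⁅X, Y⁆) =
      zornBracket (coord X) (quotCoord (D Y)) - zornBracket (coord Y) (quotCoord (D X)) := by
  rw [D.apply_lie_eq_sub, map_sub, quotCoord_lie, quotCoord_lie]

/-- The matrix of the component of a derivation that maps the `-1` weight space of `sl₃` to the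
`-1` weight space of `sl₃/Z(sl₃)`. -/
noncomputable def negBlock :
    LieDerivation k (sl3 k) (sl3ModCenter k) →ₗ[k] Matrix (Fin 3) (Fin 3) k where
  toFun D := LinearMap.toMatrix' (LinearMap.fst k _ _ ∘ₗ LinearMap.snd k _ _ ∘ₗ
    quotCoord.toLinearMap ∘ₗ D.toLinearMap ∘ₗ negVec)
  map_add' D₁ D₂ := by
    rw [← map_add]
    congr 1
    ext
    simp
  map_smul' c D := by
    rw [← map_smul]
    congr 1
    ext
    simp

lemma negBlock_mulVec (v : Fin 3 → k) :
    negBlock D *ᵥ v = (quotCoord (D (negVec v))).2.1 := by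
  rw [← toLin'_apply]
  simp [negBlock]

lemma quotCoord_apply_posVec (w : Fin 3 → k) :
    (quotCoord (D (posVec w))).2.2 = (negBlock D).trace • w - (negBlock D)ᵀ *ᵥ w := by
  suffices LinearMap.snd k _ _ ∘ₗ LinearMap.snd k _ _ ∘ₗ quotCoord.toLinearMap ∘ₗ
      D.toLinearMap ∘ₗ posVec =
        (negBlock D).trace • LinearMap.id - (negBlock D)ᵀ.mulVecLin from
    LinearMap.congr_fun this w
  refine linearMap_ext_cross fun u v ↦ ?_
  calc (quotCoord (D (posVec (u ⨯₃ v)))).2.2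
    _ = (zornBracket (coord (negVec u)) (quotCoord (D (negVec v))) -
          zornBracket (coord (negVec v)) (quotCoord (D (negVec u)))).2.2 := by
      rw [← quotCoord_derivation_lie, lie_negVec_negVec]
    _ = u ⨯₃ (negBlock D *ᵥ v) - v ⨯₃ (negBlock D *ᵥ u) := by
      simp [zornBracket, coord_negVec, negBlock_mulVec]
    _ = (negBlock D *ᵥ u) ⨯₃ v + u ⨯₃ (negBlock D *ᵥ v) := by
      rw [← cross_anticomm v]
      abel
    _ = (negBlock D).trace • (u ⨯₃ v) - (negBlock D)ᵀ *ᵥ (u ⨯₃ v) :=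
      mulVec_cross_add_cross_mulVec ..

lemma quotCoord_apply_cartan_fst : (quotCoord (D (cartan k))).1 = 0 := by
  have h := congr_arg (fun x ↦ x.2.1 0)
    (quotCoord_derivation_lie D (cartan k) (negVec (Pi.single 0 1)))
  simpa [lie_cartan_negVec, zornBracket, coord_cartan, coord_negVec] using h.symm

lemma trace_negBlock : (negBlock D).trace = 0 := by
  have h := congr_arg Prod.fst
    (quotCoord_derivation_lie D (negVec (Pi.single 0 1)) (posVec (Pi.single 0 1)))
  rw [lie_negVec_posVec_single, quotCoord_apply_cartan_fst] at h
  simpa [zornBracket, coord_negVec, coord_posVec, quotCoord_apply_posVec, ← negBlock_mulVec]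
    using h.symm

lemma negBlock_inner (m : sl3ModCenter k) :
    negBlock (LieDerivation.inner k (sl3 k) (sl3ModCenter k) m) = (quotCoord m).1 • 1 := by
  refine Matrix.ext_of_mulVec_single fun i ↦ ?_
  rw [negBlock_mulVec, smul_mulVec, one_mulVec]
  simp [quotCoord_lie, coord_negVec, zornBracket]

variable {D} in
lemma eq_zero_of_negBlock_eq_zero (hD : negBlock D = 0) (hcartan : D (cartan k) = 0) : D = 0 := by
  refine LieDerivation.ext_of_lieSpan_eq_top _ lieSpan_range_negVec ?_
  rintro _ ⟨v, rfl⟩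
  have hweight := quotCoord_derivation_lie D (cartan k) (negVec v)
  rw [lie_cartan_negVec, map_neg, map_neg, hcartan, map_zero, coord_cartan,
    zornBracket_zero, sub_zero] at hweight
  refine quotCoord.map_eq_zero_iff.1 ?_
  rw [eq_of_zornBracket_one_eq_neg hweight.symm, ← negBlock_mulVec, hD, zero_mulVec]
  rfl

variable {D} in
lemma exists_inner_eq_iff :
    (∃ m, LieDerivation.inner k (sl3 k) (sl3ModCenter k) m = D) ↔ ∃ c : k, negBlock D = c • 1 := by
  constructor
  · rintro ⟨m, rfl⟩
    exact ⟨_, negBlock_inner m⟩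
  · rintro ⟨c, hc⟩
    set y := quotCoord (D (cartan k))
    refine ⟨quotCoord.symm (c, -y.2.1, y.2.2), ?_⟩
    refine (sub_eq_zero.1 (eq_zero_of_negBlock_eq_zero ?_ ?_)).symm
    · simp [negBlock_inner, hc]
    · refine quotCoord.map_eq_zero_iff.1 ?_
      have hy : y = (0, y.2) := Prod.ext (quotCoord_apply_cartan_fst D) rfl
      simpa [quotCoord_lie, coord_cartan, zornBracket, sub_eq_zero] using hy

end Derivation

/-- The derivation acting by `A` on the `-1` weight space and by `-Aᵀ` on the `+1` weight space. -/
noncomputable def diagonalDerivation (A : sl3 k) : LieDerivation k (sl3 k) (sl3ModCenter k) where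
  toLinearMap := quotCoord.symm.toLinearMap ∘ₗ zornDiagonal A.1 ∘ₗ coord
  leibniz' X Y := quotCoord.injective <| by
    simp [quotCoord_lie, coord_lie, zornDiagonal_zornBracket A.2]

lemma negBlock_diagonalDerivation (A : sl3 k) : negBlock (diagonalDerivation A) = A.1 := by
  refine Matrix.ext_of_mulVec_single fun i ↦ ?_
  rw [negBlock_mulVec]
  simp [diagonalDerivation, coord_negVec, zornDiagonal]

variable (k) in
/-- The class of `negBlock D`, a traceless matrix, modulo scalar matrices. -/
noncomputable def negBlockClass :
    LieDerivation k (sl3 k) (sl3ModCenter k) →ₗ[k] sl3ModCenter k :=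
  (LieAlgebra.center k (sl3 k)).toSubmodule.mkQ ∘ₗ
    negBlock.codRestrict
      (LieAlgebra.SpecialLinear.sl (Fin 3) k : Submodule k (Matrix (Fin 3) (Fin 3) k))
      trace_negBlock

lemma ker_negBlockClass :
    LinearMap.ker (negBlockClass k) =
      LinearMap.range (LieDerivation.inner k (sl3 k) (sl3ModCenter k)) := by
  ext D
  rw [LinearMap.mem_range, exists_inner_eq_iff, LinearMap.mem_ker]
  exact (Submodule.Quotient.mk_eq_zero _).trans mem_center_iff

lemma negBlockClass_surjective : Function.Surjective (negBlockClass k) := fun m ↦ by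
  obtain ⟨A, rfl⟩ := LieSubmodule.Quotient.surjective_mk' _ m
  exact ⟨diagonalDerivation A, congr_arg (LieSubmodule.Quotient.mk' (LieAlgebra.center k (sl3 k)))
    (Subtype.ext (negBlock_diagonalDerivation A))⟩

variable (k) in
/-- Outer derivations `sl₃ → sl₃/Z(sl₃)` are traceless matrices modulo scalar matrices. -/
noncomputable def outerDerivationEquiv :
    (LieDerivation k (sl3 k) (sl3ModCenter k) ⧸
      LinearMap.range (LieDerivation.inner k (sl3 k) (sl3ModCenter k))) ≃ₗ[k] sl3ModCenter k :=
  (Submodule.quotEquivOfEq _ _ ker_negBlockClass.symm).trans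
    ((negBlockClass k).quotKerEquivOfSurjective negBlockClass_surjective)

end sl3

theorem H1_quotient_module_dim_general (k : Type*) [Field k] [CharP k 3] :
    Module.finrank k (ceH k (sl3 k) (sl3ModCenter k) 1) = 7 := by
  rw [← (outerDerivationEquivCeHOne k (sl3 k) (sl3ModCenter k)).finrank_eq,
    (sl3.outerDerivationEquiv k).finrank_eq, sl3.finrank_sl3ModCenter]

theorem H1_quotient_module_dim (k : Type*) [Field k] [IsAlgClosed k] [CharP k 3] :
    Module.finrank k (ceH k (sl3 k) (sl3ModCenter k) 1) = 7 :=
  H1_quotient_module_dim_general k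
end
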